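/- arXiv:2210.06703 — 7 statements merged into one kernel-verified Lean document; each statement's English description precedes it below -/
import Mathlib

section
/- Let G be a simple graph on n vertices, let r be a positive integer, and let u, v be two distinct nonadjacent vertices of G with deg_G(u) + deg_G(v) ≥ n. If the graph G + uv has a cycle cover of size at most r, then G itself has a cycle cover of size at most r. -/
/-- `G` has a cycle cover of size at most `r`: a set of at most `r` pairwise vertex-disjoint
cycles (single vertices counting as trivial cycles) such that every vertex of `G` belongs to
exactly one cycle of the set. -/
def HasCycleCoverLE {V : Type*} [Fintype V] (G : SimpleGraph V) (r : ℕ) : Prop :=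
  ∃ P : Finset (Finset V), P.card ≤ r ∧
    (∀ v : V, ∃! p, p ∈ P ∧ v ∈ p) ∧
    ∀ p ∈ P, (∃ x, p = {x}) ∨
      ∃ a : V, ∃ c : G.Walk a a, c.IsCycle ∧ ∀ x, x ∈ p ↔ x ∈ c.support

/-!
Suppose some cycle of the cover uses `uv`. Deleting that edge leaves a path of `G` from `u` to `v`
on a vertex set `p₀`. If `|N(u) ∩ p₀| + |N(v) ∩ p₀| ≥ |p₀|`, Ore's rotation argument turns the path
into a cycle of `G` on `p₀`. Otherwise, as the degrees add up to at least `n`, some other part `p`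
has `|N(u) ∩ p| + |N(v) ∩ p| > |p|`; going around `p`, some neighbour of `u` is then followed by a
neighbour of `v`, and opening `p` there splices it into the path, giving a single cycle on `p₀ ∪ p`.
-/

open Finset SimpleGraph

section Spanned

variable {V : Type*}

/-- `s` is the vertex set of a path of `G` from `a` to `b`. The path with one vertex is allowed, so
singletons and cycles can both be opened up into such paths. -/
def IsSpannedByPath (G : SimpleGraph V) (a b : V) (s : Finset V) : Prop :=
  ∃ q : G.Walk a b, q.IsPath ∧ ∀ x, x ∈ s ↔ x ∈ q.support

/-- `s` is the vertex set of a nontrivial cycle of `G`. -/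
def IsSpannedByCycle (G : SimpleGraph V) (s : Finset V) : Prop :=
  ∃ a : V, ∃ c : G.Walk a a, c.IsCycle ∧ ∀ x, x ∈ s ↔ x ∈ c.support

/-- `s` may occur as a part of a cycle cover of `G`: it is the vertex set of a trivial or nontrivial
cycle. -/
def IsCyclePart (G : SimpleGraph V) (s : Finset V) : Prop :=
  (∃ x, s = {x}) ∨ IsSpannedByCycle G s

variable {G : SimpleGraph V} {a b u v : V} {s t : Finset V}

theorem card_eq_length_add_one_of_isPath {q : G.Walk a b} (hq : q.IsPath)
    (hs : ∀ x, x ∈ s ↔ x ∈ q.support) : #s = q.length + 1 := by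
  classical
  have hs' : s = q.support.toFinset := by ext x; simp [hs]
  rw [hs', List.toFinset_card_of_nodup hq.support_nodup, Walk.length_support]

theorem mem_tail_support_iff_of_not_nil {w : G.Walk a a} (hw : ¬ w.Nil) {x : V} :
    x ∈ w.support.tail ↔ x ∈ w.support := by
  rw [w.mem_support_iff, iff_or_self]
  rintro rfl
  exact Walk.end_mem_tail_support hw

theorem card_eq_length_of_isCycle {c : G.Walk a a} (hc : c.IsCycle)
    (hs : ∀ x, x ∈ s ↔ x ∈ c.support) : #s = c.length := by
  classical
  have hs' : s = c.support.tail.toFinset := by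
    ext x
    rw [hs, List.mem_toFinset, mem_tail_support_iff_of_not_nil hc.not_nil]
  rw [hs', List.toFinset_card_of_nodup hc.support_nodup, List.length_tail, Walk.length_support,
    Nat.add_sub_cancel]

theorem exists_isPath_of_mem_darts_of_isCycle {c : G.Walk a a} (hc : c.IsCycle) {d : G.Dart}
    (hd : d ∈ c.darts) :
    ∃ q : G.Walk d.snd d.fst, q.IsPath ∧ (∀ x, x ∈ c.support ↔ x ∈ q.support) ∧
      d.edge ∉ q.edges := by
  obtain ⟨p, q, rfl⟩ := c.isSubwalk_toWalk_adj_iff_mem_darts.2 hd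
  have hperm : ((p.append d.adj.toWalk).append q).support.tail.Perm (q.append p).support := by
    simpa [Walk.tail_support_append, Walk.support_append] using List.perm_append_comm
  have hedges : (p.edges ++ d.edge :: q.edges).Nodup := by
    simpa [Walk.edges_append] using! hc.edges_nodup
  refine ⟨q.append p, ?_, fun x ↦ ?_, ?_⟩
  · exact (Walk.isPath_def _).2 (hperm.nodup_iff.1 hc.support_nodup)
  · rw [← mem_tail_support_iff_of_not_nil hc.not_nil, hperm.mem_iff]
  · grind [Walk.edges_append]

/-- Pósa rotation: the part of `q` after `d` is traversed backwards. -/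
theorem exists_isPath_rotate_of_isPath {q : G.Walk u v} (hq : q.IsPath) {d : G.Dart}
    (hd : d ∈ q.darts) (hadj : G.Adj d.fst v) :
    ∃ q' : G.Walk u d.snd, q'.IsPath ∧ ∀ x, x ∈ q.support ↔ x ∈ q'.support := by
  obtain ⟨p, r, rfl⟩ := q.isSubwalk_toWalk_adj_iff_mem_darts.2 hd
  have hperm : ((p.append d.adj.toWalk).append r).support.Perm
      (p.append (.cons hadj r.reverse)).support := by
    simpa [Walk.support_append] using (List.reverse_perm r.support).symm.append_left p.support
  exact ⟨_, (Walk.isPath_def _).2 (hperm.nodup_iff.1 hq.support_nodup), fun x ↦ hperm.mem_iff⟩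

theorem exists_dart_of_length_lt_card_add_card (w : G.Walk a b) {A B : Finset V}
    (hA : ∀ x ∈ A, x ∈ w.support.dropLast) (hB : ∀ x ∈ B, x ∈ w.support.tail)
    (hAB : w.length < #A + #B) : ∃ d ∈ w.darts, d.fst ∈ A ∧ d.snd ∈ B := by
  classical
  let D := w.darts.toFinset
  have hA' : #A ≤ #{d ∈ D | d.fst ∈ A} := by
    refine card_le_card_of_surjOn (·.fst) fun x hx ↦ ?_
    obtain ⟨d, hd, rfl⟩ : ∃ d ∈ w.darts, d.fst = x :=
      List.mem_map.1 (w.map_fst_darts ▸ hA x hx)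
    exact ⟨d, by simpa [D, hd] using hx, rfl⟩
  have hB' : #B ≤ #{d ∈ D | d.snd ∈ B} := by
    refine card_le_card_of_surjOn (·.snd) fun x hx ↦ ?_
    obtain ⟨d, hd, rfl⟩ : ∃ d ∈ w.darts, d.snd = x :=
      List.mem_map.1 (w.map_snd_darts ▸ hB x hx)
    exact ⟨d, by simpa [D, hd] using hx, rfl⟩
  have hD : #D ≤ w.length := w.length_darts ▸ w.darts.toFinset_card_le
  obtain ⟨d, hd⟩ := inter_nonempty_of_card_lt_card_add_card
    (filter_subset (·.fst ∈ A) D) (filter_subset (·.snd ∈ B) D) (by omega)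
  simp only [mem_inter, mem_filter, D, List.mem_toFinset] at hd
  exact ⟨d, hd.1.1, hd.1.2, hd.2.2⟩

namespace IsSpannedByPath

theorem start_mem (hs : IsSpannedByPath G a b s) : a ∈ s := by
  obtain ⟨q, -, hqs⟩ := hs
  exact (hqs a).2 q.start_mem_support

theorem end_mem (hs : IsSpannedByPath G a b s) : b ∈ s := by
  obtain ⟨q, -, hqs⟩ := hs
  exact (hqs b).2 q.end_mem_support

protected theorem symm (hs : IsSpannedByPath G a b s) : IsSpannedByPath G b a s := by
  obtain ⟨q, hq, hqs⟩ := hs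
  exact ⟨q.reverse, hq.reverse, by simpa using hqs⟩

theorem append [DecidableEq V] {c d : V} (hs : IsSpannedByPath G a b s)
    (ht : IsSpannedByPath G c d t) (hst : Disjoint s t) (hbc : G.Adj b c) :
    IsSpannedByPath G a d (s ∪ t) := by
  obtain ⟨p, hp, hps⟩ := hs
  obtain ⟨q, hq, hqt⟩ := ht
  have hsupp : (p.append (.cons hbc q)).support = p.support ++ q.support := by
    rw [Walk.support_append, Walk.support_cons, List.tail_cons]
  refine ⟨p.append (.cons hbc q), ?_, fun x ↦ ?_⟩
  · rw [Walk.isPath_def, hsupp]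
    refine hp.support_nodup.append hq.support_nodup fun x hx hx' ↦ ?_
    exact disjoint_left.1 hst ((hps x).2 hx) ((hqt x).2 hx')
  · rw [hsupp, mem_union, hps, hqt, List.mem_append]

theorem isSpannedByCycle_of_adj (hs : IsSpannedByPath G a b s) (hcard : 3 ≤ #s) (hba : G.Adj b a) :
    IsSpannedByCycle G s := by
  obtain ⟨q, hq, hqs⟩ := hs
  refine ⟨b, .cons hba q, ?_, fun x ↦ ?_⟩
  · have := card_eq_length_add_one_of_isPath hq hqs
    rw [Walk.isCycle_iff_isPath_tail_and_le_length]
    exact ⟨by simpa using hq, by rw [Walk.length_cons]; omega⟩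
  · rw [hqs, Walk.support_cons, List.mem_cons, iff_or_self]
    rintro rfl
    exact q.end_mem_support

theorem isSpannedByCycle_union [DecidableEq V] (hs : IsSpannedByPath G u v s)
    (ht : IsSpannedByPath G b a t) (hst : Disjoint s t) (huv : u ≠ v) (hvb : G.Adj v b)
    (hau : G.Adj a u) : IsSpannedByCycle G (s ∪ t) := by
  refine (hs.append ht hst hvb).isSpannedByCycle_of_adj (two_lt_card.2 ?_) hau
  have ha : a ∉ s := disjoint_right.1 hst ht.end_mem
  exact ⟨u, mem_union_left t hs.start_mem, v, mem_union_left t hs.end_mem,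
    a, mem_union_right s ht.end_mem, huv, ne_of_mem_of_not_mem hs.start_mem ha,
    ne_of_mem_of_not_mem hs.end_mem ha⟩

theorem isSpannedByCycle_of_card_le [DecidableEq V] [Fintype (G.neighborSet u)]
    [Fintype (G.neighborSet v)] (hs : IsSpannedByPath G u v s) (hadj : ¬ G.Adj u v)
    (hcard : #s ≤ #(s ∩ G.neighborFinset u) + #(s ∩ G.neighborFinset v)) :
    IsSpannedByCycle G s := by
  obtain ⟨q, hq, hqs⟩ := hs
  have hlen := card_eq_length_add_one_of_isPath hq hqs
  obtain ⟨d, hd, hvd, hud⟩ : ∃ d ∈ q.darts,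
      d.fst ∈ s ∩ G.neighborFinset v ∧ d.snd ∈ s ∩ G.neighborFinset u := by
    refine exists_dart_of_length_lt_card_add_card q (fun x hx ↦ ?_) (fun x hx ↦ ?_) (by omega)
    all_goals rw [mem_inter, hqs, mem_neighborFinset] at hx
    · rw [← q.dropLast_support_concat, List.mem_append, List.mem_singleton] at hx
      exact hx.1.resolve_right hx.2.ne'
    · rw [Walk.mem_support_iff] at hx
      exact hx.1.resolve_left hx.2.ne'
  rw [mem_inter, mem_neighborFinset] at hvd hud
  obtain ⟨q', hq', hqq'⟩ := exists_isPath_rotate_of_isPath hq hd hvd.2.symm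
  have hpos : 0 < q.length := q.length_darts ▸ List.length_pos_of_mem hd
  have hne_one : q.length ≠ 1 := fun hone ↦ hadj (Walk.adj_of_length_eq_one hone)
  exact isSpannedByCycle_of_adj ⟨q', hq', fun x ↦ (hqs x).trans (hqq' x)⟩ (by omega) hud.2.symm

end IsSpannedByPath

theorem IsCyclePart.exists_isSpannedByPath_of_card_lt [DecidableEq V] {A B : Finset V}
    (hs : IsCyclePart G s) (hcard : #s < #(s ∩ A) + #(s ∩ B)) :
    ∃ a ∈ A, ∃ b ∈ B, IsSpannedByPath G b a s := by
  obtain ⟨x, rfl⟩ | ⟨y, c, hc, hcs⟩ := hs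
  · have hx : x ∈ A ∧ x ∈ B := by grind
    exact ⟨x, hx.1, x, hx.2, .nil, .nil, by simp⟩
  · rw [card_eq_length_of_isCycle hc hcs] at hcard
    have htail (x : V) (hx : x ∈ s) : x ∈ c.support.tail :=
      (mem_tail_support_iff_of_not_nil hc.not_nil).2 ((hcs x).1 hx)
    have hdropLast (x : V) (hx : x ∈ s) : x ∈ c.support.dropLast :=
      c.tail_support_perm_dropLast_support.mem_iff.1 (htail x hx)
    obtain ⟨d, hd, hA, hB⟩ := exists_dart_of_length_lt_card_add_card c
      (fun x hx ↦ hdropLast x (mem_of_mem_inter_left hx))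
      (fun x hx ↦ htail x (mem_of_mem_inter_left hx)) hcard
    obtain ⟨q, hq, hqs, -⟩ := exists_isPath_of_mem_darts_of_isCycle hc hd
    exact ⟨d.fst, (mem_inter.1 hA).2, d.snd, (mem_inter.1 hB).2, q, hq,
      fun x ↦ (hcs x).trans (hqs x)⟩

theorem isCyclePart_or_isSpannedByPath_of_sup_edge (hs : IsCyclePart (G ⊔ edge u v) s) :
    IsCyclePart G s ∨ IsSpannedByPath G u v s := by
  have hG : ∀ e ∈ (G ⊔ edge u v).edgeSet, e ≠ s(u, v) → e ∈ G.edgeSet := by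
    intro e he hne
    rw [edgeSet_sup] at he
    exact he.resolve_right fun he' ↦ hne (edgeSet_edge_subset he')
  obtain hx | ⟨y, c, hc, hcs⟩ := hs
  · exact .inl (.inl hx)
  by_cases huv : s(u, v) ∈ c.edges
  · right
    obtain ⟨d, hd, hde⟩ := List.mem_map.1 huv
    obtain ⟨q, hq, hqs, hdq⟩ := exists_isPath_of_mem_darts_of_isCycle hc hd
    have hqG : ∀ e ∈ q.edges, e ∈ G.edgeSet := fun e he ↦
      hG e (q.edges_subset_edgeSet he) fun h ↦ hdq (hde ▸ h ▸ he)
    have hpath : IsSpannedByPath G d.snd d.fst s :=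
      ⟨q.transfer G hqG, hq.transfer hqG, fun x ↦ by rw [Walk.support_transfer, hcs, hqs]⟩
    obtain ⟨hfst, hsnd⟩ | ⟨hfst, hsnd⟩ := Sym2.eq_iff.1 hde
    all_goals rw [hfst, hsnd] at hpath
    · exact hpath.symm
    · exact hpath
  · have hcG : ∀ e ∈ c.edges, e ∈ G.edgeSet := fun e he ↦
      hG e (c.edges_subset_edgeSet he) fun h ↦ huv (h ▸ he)
    exact .inl (.inr ⟨y, c.transfer G hcG, hc.transfer hcG, by simpa using hcs⟩)

end Spanned

/-- Every vertex lies in exactly one member of `P`, as required of a cycle cover. Unlike a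
`Finpartition`, `P` may contain the empty set. -/
def IsExactCover {V : Type*} (P : Finset (Finset V)) : Prop :=
  ∀ v : V, ∃! p, p ∈ P ∧ v ∈ p

namespace IsExactCover

variable {V : Type*} {P : Finset (Finset V)} {p q : Finset V}

theorem disjoint (hP : IsExactCover P) (hp : p ∈ P) (hq : q ∈ P) (hpq : p ≠ q) : Disjoint p q :=
  disjoint_left.2 fun x hxp hxq ↦ hpq ((hP x).unique ⟨hp, hxp⟩ ⟨hq, hxq⟩)

variable [DecidableEq V]

theorem card_filter_mem (hP : IsExactCover P) (x : V) : #{p ∈ P | x ∈ p} = 1 := by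
  obtain ⟨p, hp, huniq⟩ := hP x
  exact card_eq_one.2 ⟨p, by grind⟩

theorem merge (hP : IsExactCover P) (hp : p ∈ P) (hq : q ∈ P) :
    IsExactCover (insert (p ∪ q) ((P.erase p).erase q)) := by
  intro x
  obtain ⟨m, ⟨hm, hxm⟩, huniq⟩ := hP x
  by_cases hx : x ∈ p ∪ q
  · exact ⟨p ∪ q, by grind, by grind⟩
  · exact ⟨m, by grind, by grind⟩

theorem exists_ne_card_lt [Fintype V] (hP : IsExactCover P) {A B : Finset V}
    (hAB : Fintype.card V ≤ #A + #B) (hp : p ∈ P) (hlt : #(p ∩ A) + #(p ∩ B) < #p) :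
    ∃ q ∈ P, q ≠ p ∧ #q < #(q ∩ A) + #(q ∩ B) := by
  by_contra! hle
  have hinter (A : Finset V) : ∑ q ∈ P, #(q ∩ A) = #A := by
    simpa [inter_comm] using sum_card_inter (s := A) fun x _ ↦ hP.card_filter_mem x
  have hcard : ∑ q ∈ P, #q = Fintype.card V := by simpa using sum_card hP.card_filter_mem
  have hsum : ∑ q ∈ P, (#(q ∩ A) + #(q ∩ B)) < ∑ q ∈ P, #q :=
    sum_lt_sum (fun q hq ↦ by grind) ⟨p, hp, hlt⟩
  rw [sum_add_distrib, hinter, hinter, hcard] at hsum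
  omega

theorem hasCycleCoverLE_of_merge [Fintype V] {G : SimpleGraph V} {r : ℕ} (hP : IsExactCover P)
    (hr : #P ≤ r) (hp : p ∈ P) (hq : q ∈ P) (hpq : IsSpannedByCycle G (p ∪ q))
    (hG : ∀ m ∈ P, m ≠ p → IsCyclePart G m) : HasCycleCoverLE G r := by
  refine ⟨_, ?_, hP.merge hp hq, fun m hm ↦ ?_⟩
  · have := card_insert_le (p ∪ q) ((P.erase p).erase q)
    have := card_erase_le (s := P.erase p) (a := q)
    have := card_erase_add_one hp
    omega
  · obtain rfl | hm := mem_insert.1 hm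
    · exact .inr hpq
    · simp only [mem_erase] at hm
      exact hG m hm.2.2 hm.2.1

end IsExactCover

theorem stmt0 {V : Type*} [Fintype V] (G : SimpleGraph V) [DecidableRel G.Adj]
    (n r : ℕ) (hn : Fintype.card V = n) (hr : 0 < r)
    (u v : V) (huv : u ≠ v) (hadj : ¬ G.Adj u v)
    (hdeg : n ≤ G.degree u + G.degree v)
    (h : HasCycleCoverLE (G ⊔ SimpleGraph.fromEdgeSet {s(u, v)}) r) :
    HasCycleCoverLE G r := by
  classical
  obtain ⟨P, hPr, hP : IsExactCover P, hparts⟩ := h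
  by_cases hG : ∀ p ∈ P, IsCyclePart G p
  · exact ⟨P, hPr, hP, hG⟩
  obtain ⟨p₀, hp₀, hp₀G⟩ : ∃ p ∈ P, ¬ IsCyclePart G p := by simpa using hG
  have hsplit (p) (hp : p ∈ P) : IsCyclePart G p ∨ IsSpannedByPath G u v p :=
    isCyclePart_or_isSpannedByPath_of_sup_edge (hparts p hp)
  have hpath : IsSpannedByPath G u v p₀ := (hsplit p₀ hp₀).resolve_left hp₀G
  have hothers (p) (hp : p ∈ P) (hne : p ≠ p₀) : IsCyclePart G p :=
    (hsplit p hp).resolve_right fun hp' ↦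
      disjoint_left.1 (hP.disjoint hp hp₀ hne) hp'.start_mem hpath.start_mem
  have hlt : #(p₀ ∩ G.neighborFinset u) + #(p₀ ∩ G.neighborFinset v) < #p₀ :=
    lt_of_not_ge fun hle ↦ hp₀G (.inr (hpath.isSpannedByCycle_of_card_le hadj hle))
  obtain ⟨p, hp, hne, hlt'⟩ := hP.exists_ne_card_lt (by simpa [hn] using hdeg) hp₀ hlt
  obtain ⟨a, ha, b, hb, hpath'⟩ := (hothers p hp hne).exists_isSpannedByPath_of_card_lt hlt'
  rw [mem_neighborFinset] at ha hb
  have hcycle : IsSpannedByCycle G (p₀ ∪ p) :=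
    hpath.isSpannedByCycle_union hpath' (hP.disjoint hp₀ hp hne.symm) huv hb ha.symm
  exact hP.hasCycleCoverLE_of_merge hPr hp₀ hp hcycle hothers
end

section
/- Let G be a simple graph on n vertices and let r be a positive integer. Suppose G_0 = G, G_1, ..., G_t is a sequence of graphs on the same vertex set such that for each i < t the graph G_{i+1} equals G_i + u_i v_i for some pair of distinct vertices u_i, v_i that are nonadjacent in G_i and satisfy deg_{G_i}(u_i) + deg_{G_i}(v_i) ≥ n. Then G has a cycle cover of size at most r if and only if G_t has a cycle cover of size at most r. -/
/-!
Only the passage from `G + uv` back to `G` needs an argument. If a cycle of the cover of `G + uv`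
uses the edge `uv`, its vertex set `p₀` is traversed in `G` by a path from `u` to `v`, and all other
cycles lie in `G`. Let `f` send each vertex to its successor on its cycle, where the successor of
`v` on the broken cycle is `u`. The sets `{y | u ~ f y}` and `{y | v ~ y}` have `deg u` and `deg v`
elements and both miss `v`, so, as `deg u + deg v ≥ n`, some `y` lies in both. Replacing `y (f y)`
and `uv` by `u (f y)` and `v y` then either repairs the broken cycle or merges it with the cycle
through `y`, and the number of cycles does not grow.
-/

section Spanning

variable {V : Type*}

/-- The vertex set `s` is traversed by a path of `G` from `u` to `v`. -/
def HasSpanningPath (G : SimpleGraph V) (s : Finset V) (u v : V) : Prop :=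
  ∃ w : G.Walk u v, w.IsPath ∧ ∀ x, x ∈ s ↔ x ∈ w.support

/-- The vertex set `s` is traversed by a cycle of `G`, a single vertex counting as a trivial cycle.
This is verbatim the condition that `HasCycleCoverLE` imposes on the members of a cover. -/
def HasSpanningCycle (G : SimpleGraph V) (s : Finset V) : Prop :=
  (∃ x, s = {x}) ∨ ∃ a : V, ∃ c : G.Walk a a, c.IsCycle ∧ ∀ x, x ∈ s ↔ x ∈ c.support

variable {G H : SimpleGraph V} {s t : Finset V} {a b c d u v : V}

theorem card_eq_length_add_one_of_isPath_s1 {w : G.Walk a b} (hw : w.IsPath)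
    (hs : ∀ x, x ∈ s ↔ x ∈ w.support) : s.card = w.length + 1 := by
  classical
  rw [← w.length_support, ← List.toFinset_card_of_nodup hw.support_nodup]
  exact congrArg Finset.card (Finset.ext fun x => by rw [hs, List.mem_toFinset])

theorem three_le_card_of_isCycle {w : G.Walk a a} (hw : w.IsCycle)
    (hs : ∀ x, x ∈ s ↔ x ∈ w.support) : 3 ≤ s.card := by
  classical
  calc
    3 ≤ w.support.tail.length := by simpa using hw.three_le_length
    _ = w.support.tail.toFinset.card := (List.toFinset_card_of_nodup hw.support_nodup).symm
    _ ≤ s.card := Finset.card_le_card fun x hx =>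
      (hs x).2 (List.mem_of_mem_tail (List.mem_toFinset.1 hx))

theorem hasSpanningPath_snd_of_isCycle {w : G.Walk a a} (hw : w.IsCycle)
    (hs : ∀ x, x ∈ s ↔ x ∈ w.support) : HasSpanningPath G s w.snd a := by
  refine ⟨w.tail, hw.isPath_tail, fun x => ?_⟩
  rw [hs, ← SimpleGraph.Walk.cons_support_tail hw.not_nil, List.mem_cons, or_iff_right_of_imp]
  rintro rfl
  exact w.tail.end_mem_support

theorem mem_edgeSet_of_mem_edges_sup_edge {w : (G ⊔ .edge u v).Walk a b} (huv : s(u, v) ∉ w.edges)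
    {e : Sym2 V} (he : e ∈ w.edges) : e ∈ G.edgeSet := by
  have he' : e ∈ (G ⊔ .edge u v).edgeSet := w.edges_subset_edgeSet he
  rw [SimpleGraph.edgeSet_sup] at he'
  refine he'.resolve_right fun hedge => huv ?_
  rw [SimpleGraph.edge, SimpleGraph.edgeSet_fromEdgeSet] at hedge
  exact Set.mem_singleton_iff.1 hedge.1 ▸ he

namespace HasSpanningPath

theorem left_mem (hs : HasSpanningPath G s u v) : u ∈ s := by
  obtain ⟨w, -, hw⟩ := hs
  exact (hw u).2 w.start_mem_support

theorem symm (hs : HasSpanningPath G s u v) : HasSpanningPath G s v u := by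
  obtain ⟨w, hpath, hw⟩ := hs
  exact ⟨w.reverse, hpath.reverse, by simpa using hw⟩

theorem append [DecidableEq V] (hs : HasSpanningPath G s a b) (ht : HasSpanningPath G t c d)
    (hst : Disjoint s t) (hbc : G.Adj b c) : HasSpanningPath G (s ∪ t) a d := by
  obtain ⟨w₁, hpath₁, hw₁⟩ := hs
  obtain ⟨w₂, hpath₂, hw₂⟩ := ht
  have hsupport : (w₁.append (.cons hbc w₂)).support = w₁.support ++ w₂.support := by
    simp [SimpleGraph.Walk.support_append]
  refine ⟨w₁.append (.cons hbc w₂), ?_, fun x => ?_⟩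
  · rw [SimpleGraph.Walk.isPath_def, hsupport]
    refine hpath₁.support_nodup.append hpath₂.support_nodup fun x hx₁ hx₂ => ?_
    exact Finset.disjoint_left.1 hst ((hw₁ x).2 hx₁) ((hw₂ x).2 hx₂)
  · rw [hsupport, Finset.mem_union, List.mem_append, hw₁, hw₂]

theorem hasSpanningCycle (hs : HasSpanningPath G s a b) (hba : G.Adj b a) (hcard : 3 ≤ s.card) :
    HasSpanningCycle G s := by
  obtain ⟨w, hpath, hw⟩ := hs
  refine Or.inr ⟨b, .cons hba w, ?_, fun x => ?_⟩
  · refine (w.cons_isCycle_iff hba).2 ⟨hpath, fun hedge => ?_⟩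
    have hone : w.length = 1 := hpath.length_eq_one_of_mem_edges (Sym2.eq_swap ▸ hedge)
    have hlength := card_eq_length_add_one_of_isPath_s1 hpath hw
    omega
  · rw [hw, SimpleGraph.Walk.support_cons, List.mem_cons, or_iff_right_of_imp]
    rintro rfl
    exact w.end_mem_support

theorem hasSpanningCycle_union [DecidableEq V] (hs : HasSpanningPath G s a b)
    (ht : HasSpanningPath G t c d) (hst : Disjoint s t) (hbc : G.Adj b c) (hda : G.Adj d a)
    (hcard : 3 ≤ (s ∪ t).card) : HasSpanningCycle G (s ∪ t) :=
  (hs.append ht hst hbc).hasSpanningCycle hda hcard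

/-- The permutation sends each vertex of the path to its successor, and `v` back to `u`. -/
theorem exists_succ [DecidableEq V] (hs : HasSpanningPath G s u v) :
    ∃ σ : Equiv.Perm V, Set.MapsTo σ s s ∧ σ v = u ∧ ∀ y ∈ s, y ≠ v → ∃ s₁ s₂,
      Disjoint s₁ s₂ ∧ s₁ ∪ s₂ = s ∧ HasSpanningPath G s₁ u y ∧ HasSpanningPath G s₂ (σ y) v := by
  obtain ⟨w, hpath, hw⟩ := hs
  refine ⟨w.support.formPerm, fun y hy => ?_, ?_, fun y hy hyv => ?_⟩
  · exact (hw _).2 (List.formPerm_apply_mem_of_mem ((hw y).1 hy))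
  · cases w <;> simp [List.formPerm_eq_head_iff_eq_getLast]
  obtain ⟨i, rfl, hi⟩ := SimpleGraph.Walk.mem_support_iff_exists_getVert.1 ((hw y).1 hy)
  have hi : i < w.length := hi.lt_of_ne fun h => hyv (h ▸ w.getVert_length)
  have hsucc : w.support.formPerm (w.getVert i) = w.getVert (i + 1) := by
    rw [w.getVert_eq_support_getElem hi.le, w.getVert_eq_support_getElem hi]
    exact List.formPerm_apply_lt_getElem _ hpath.support_nodup i (by simpa using hi)
  have hsplit : (w.take i).support ++ (w.drop (i + 1)).support = w.support := by
    rw [w.support_take, w.drop_support_eq_support_drop_min, Nat.min_eq_left hi,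
      List.take_append_drop]
  refine ⟨(w.take i).support.toFinset, (w.drop (i + 1)).support.toFinset, ?_, ?_,
    ⟨w.take i, hpath.take i, by simp⟩, ?_⟩
  · rw [List.disjoint_toFinset_iff_disjoint]
    exact List.disjoint_of_nodup_append (hsplit ▸ hpath.support_nodup)
  · ext x
    rw [← List.toFinset_append, hsplit, List.mem_toFinset, hw]
  · rw [hsucc]
    exact ⟨w.drop (i + 1), hpath.drop (i + 1), by simp⟩

theorem exists_succ_hasSpanningCycle (hs : HasSpanningPath G s u v)
    (hcard : 3 ≤ s.card) : ∃ σ : Equiv.Perm V, Set.MapsTo σ s s ∧ σ v = u ∧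
      ∀ y ∈ s, G.Adj u (σ y) → G.Adj v y → HasSpanningCycle G s := by
  classical
  obtain ⟨σ, hmaps, hσv, hσ⟩ := hs.exists_succ
  refine ⟨σ, hmaps, hσv, fun y hy huσ hvy => ?_⟩
  obtain ⟨s₁, s₂, hdisj, rfl, hs₁, hs₂⟩ := hσ y hy hvy.ne'
  exact hs₁.hasSpanningCycle_union hs₂.symm hdisj hvy.symm huσ.symm hcard

theorem of_sup_edge (hs : HasSpanningPath (G ⊔ .edge u v) s u v) (hcard : 3 ≤ s.card) :
    HasSpanningPath G s u v := by
  obtain ⟨w, hpath, hw⟩ := hs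
  have huv : s(u, v) ∉ w.edges := fun hedge => by
    have hone : w.length = 1 := hpath.length_eq_one_of_mem_edges hedge
    have hlength := card_eq_length_add_one_of_isPath_s1 hpath hw
    omega
  exact ⟨w.transfer G fun _ => mem_edgeSet_of_mem_edges_sup_edge huv, hpath.transfer _,
    by simpa using hw⟩

end HasSpanningPath

theorem hasSpanningPath_of_mem_edges_of_isCycle {w : G.Walk a a} (hw : w.IsCycle)
    (hs : ∀ x, x ∈ s ↔ x ∈ w.support) (huv : s(u, v) ∈ w.edges) : HasSpanningPath G s u v := by
  classical
  have hu : u ∈ w.support := w.fst_mem_support_of_mem_edges huv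
  have hadj : (w.rotate u hu).toSubgraph.Adj u v := by
    rwa [w.toSubgraph_rotate, SimpleGraph.Walk.adj_toSubgraph_iff_mem_edges]
  obtain ⟨w', hw', rfl, hverts⟩ := (hw.rotate hu).exists_isCycle_snd_verts_eq hadj
  refine (hasSpanningPath_snd_of_isCycle hw' fun x => ?_).symm
  rw [hs, ← w'.mem_verts_toSubgraph, hverts, w.toSubgraph_rotate, w.mem_verts_toSubgraph]

namespace HasSpanningCycle

theorem mono (hGH : G ≤ H) (hs : HasSpanningCycle G s) : HasSpanningCycle H s := by
  refine hs.imp_right ?_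
  rintro ⟨a, w, hw, hmem⟩
  exact ⟨a, w.mapLe hGH, hw.mapLe hGH, by simpa using hmem⟩

theorem exists_succ (hs : HasSpanningCycle G s) :
    ∃ σ : Equiv.Perm V, Set.MapsTo σ s s ∧ ∀ y ∈ s, HasSpanningPath G s (σ y) y := by
  classical
  obtain ⟨x, rfl⟩ | ⟨a, w, hw, hmem⟩ := hs
  · refine ⟨1, fun y hy => hy, fun y hy => ?_⟩
    obtain rfl := Finset.mem_singleton.1 hy
    exact ⟨.nil, .nil, by simp⟩
  · have hpath := hasSpanningPath_snd_of_isCycle hw hmem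
    obtain ⟨σ, hmaps, hσa, hσ⟩ := hpath.exists_succ
    refine ⟨σ, hmaps, fun y hy => ?_⟩
    obtain rfl | hya := eq_or_ne y a
    · rwa [hσa]
    obtain ⟨s₁, s₂, hdisj, rfl, hs₁, hs₂⟩ := hσ y hy hya
    rw [Finset.union_comm]
    exact hs₂.append hs₁ hdisj.symm (w.adj_snd hw.not_nil)

theorem exists_succ_hasSpanningCycle_union [DecidableEq V] (ht : HasSpanningCycle G t)
    (hs : HasSpanningPath G s u v) (hcard : 3 ≤ s.card) (hst : Disjoint s t) :
    ∃ σ : Equiv.Perm V, Set.MapsTo σ t t ∧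
      ∀ y ∈ t, G.Adj u (σ y) → G.Adj v y → HasSpanningCycle G (s ∪ t) := by
  obtain ⟨σ, hmaps, hσ⟩ := ht.exists_succ
  refine ⟨σ, hmaps, fun y hy huσ hvy => ?_⟩
  exact hs.hasSpanningCycle_union (hσ y hy).symm hst hvy huσ.symm
    (hcard.trans (Finset.card_le_card Finset.subset_union_left))

theorem or_hasSpanningPath_of_sup_edge (hs : HasSpanningCycle (G ⊔ .edge u v) s) :
    HasSpanningCycle G s ∨ HasSpanningPath G s u v ∧ 3 ≤ s.card := by
  obtain hsingle | ⟨a, w, hw, hmem⟩ := hs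
  · exact Or.inl (Or.inl hsingle)
  by_cases huv : s(u, v) ∈ w.edges
  · have hcard : 3 ≤ s.card := three_le_card_of_isCycle hw hmem
    exact Or.inr ⟨(hasSpanningPath_of_mem_edges_of_isCycle hw hmem huv).of_sup_edge hcard, hcard⟩
  · exact Or.inl (Or.inr ⟨a, w.transfer G fun _ => mem_edgeSet_of_mem_edges_sup_edge huv,
      hw.transfer _, by simpa using hmem⟩)

end HasSpanningCycle

end Spanning

section Partition

variable {α : Type*} {P : Finset (Finset α)}

theorem existsUnique_mem_merge [DecidableEq α] (hP : ∀ x, ∃! p, p ∈ P ∧ x ∈ p) {p q : Finset α}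
    (hp : p ∈ P) (hq : q ∈ P) (x : α) : ∃! s, s ∈ insert (p ∪ q) (P \ {p, q}) ∧ x ∈ s := by
  obtain ⟨s, ⟨hs, hxs⟩, hunique⟩ := hP x
  by_cases hx : x ∈ p ∪ q
  · refine ⟨p ∪ q, ⟨Finset.mem_insert_self _ _, hx⟩, fun s' hs' => ?_⟩
    grind
  · refine ⟨s, ⟨?_, hxs⟩, fun s' hs' => ?_⟩ <;> grind

theorem card_merge_le [DecidableEq α] {p : Finset α} (hp : p ∈ P) (q : Finset α) :
    (insert (p ∪ q) (P \ {p, q})).card ≤ P.card := by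
  have hlt : (P \ {p, q}).card < P.card :=
    Finset.card_lt_card (Finset.ssubset_iff_of_subset Finset.sdiff_subset |>.2 ⟨p, hp, by simp⟩)
  exact (Finset.card_insert_le _ _).trans hlt

theorem exists_injective_of_forall_part (hP : ∀ x, ∃! p, p ∈ P ∧ x ∈ p)
    {R : Finset α → α → α → Prop}
    (h : ∀ p ∈ P, ∃ σ : Equiv.Perm α, Set.MapsTo σ p p ∧ ∀ y ∈ p, R p y (σ y)) :
    ∃ f : α → α, Function.Injective f ∧ ∀ p ∈ P, ∀ y ∈ p, R p y (f y) := by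
  choose! σ hmaps hσ using h
  choose part hpart hunique using hP
  have part_eq {p : Finset α} {y : α} (hp : p ∈ P) (hy : y ∈ p) : part y = p :=
    (hunique y p ⟨hp, hy⟩).symm
  have part_apply (y : α) : part (σ (part y) y) = part y :=
    part_eq (hpart y).1 (hmaps _ (hpart y).1 (hpart y).2)
  refine ⟨fun y => σ (part y) y, fun y z hyz => ?_, fun p hp y hy => ?_⟩
  · have hyz : σ (part y) y = σ (part z) z := hyz
    have hsame : part y = part z := by rw [← part_apply y, hyz, part_apply]
    rw [hsame] at hyz
    exact (σ (part z)).injective hyz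
  · simpa only [part_eq hp hy] using hσ p hp y hy

end Partition

section Closure

variable {V : Type*} [Fintype V] {G : SimpleGraph V} {u v : V}

theorem exists_adj_apply_and_adj {f : V → V} (hf : Function.Injective f) (hfv : f v = u)
    (hdeg : Fintype.card V ≤ (G.neighborSet u).ncard + (G.neighborSet v).ncard) :
    ∃ y, G.Adj u (f y) ∧ G.Adj v y := by
  by_contra! hnone
  have hdisj : Disjoint (f ⁻¹' G.neighborSet u) (G.neighborSet v) :=
    Set.disjoint_left.2 hnone
  have hpreimage : (f ⁻¹' G.neighborSet u).ncard = (G.neighborSet u).ncard :=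
    Set.ncard_preimage_of_injective_subset_range hf
      ((Set.subset_univ _).trans (Finite.surjective_of_injective hf).range_eq.ge)
  have hmiss : v ∉ f ⁻¹' G.neighborSet u ∪ G.neighborSet v := by simp [hfv]
  have hlt : (f ⁻¹' G.neighborSet u ∪ G.neighborSet v).ncard < Fintype.card V := by
    rw [← Nat.card_eq_fintype_card]
    exact Set.ncard_lt_card (Set.ne_univ_iff_exists_notMem _ |>.2 ⟨v, hmiss⟩)
  rw [Set.ncard_union_eq hdisj, hpreimage] at hlt
  omega

theorem exists_hasSpanningCycle_union [DecidableEq V]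
    (hdeg : Fintype.card V ≤ (G.neighborSet u).ncard + (G.neighborSet v).ncard)
    {P : Finset (Finset V)} (hP : ∀ x, ∃! p, p ∈ P ∧ x ∈ p) {p₀ : Finset V} (hp₀ : p₀ ∈ P)
    (hpath : HasSpanningPath G p₀ u v) (hcard : 3 ≤ p₀.card)
    (hrest : ∀ p ∈ P, p ≠ p₀ → HasSpanningCycle G p) :
    ∃ q ∈ P, HasSpanningCycle G (p₀ ∪ q) := by
  have hsucc : ∀ p ∈ P, ∃ σ : Equiv.Perm V, Set.MapsTo σ p p ∧ ∀ y ∈ p, (y = v → σ y = u) ∧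
      (G.Adj u (σ y) → G.Adj v y → HasSpanningCycle G (p₀ ∪ p)) := by
    intro p hp
    obtain rfl | hne := eq_or_ne p p₀
    · obtain ⟨σ, hmaps, hσv, hσ⟩ := hpath.exists_succ_hasSpanningCycle hcard
      exact ⟨σ, hmaps, fun y hy => ⟨fun h => h ▸ hσv, by simpa using hσ y hy⟩⟩
    · have hdisj : Disjoint p₀ p := Finset.disjoint_left.2 fun x hx₀ hx =>
        hne ((hP x).unique ⟨hp, hx⟩ ⟨hp₀, hx₀⟩)
      obtain ⟨σ, hmaps, hσ⟩ :=
        (hrest p hp hne).exists_succ_hasSpanningCycle_union hpath hcard hdisj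
      refine ⟨σ, hmaps, fun y hy => ⟨?_, hσ y hy⟩⟩
      rintro rfl
      exact absurd hy (Finset.disjoint_left.1 hdisj hpath.symm.left_mem)
  obtain ⟨f, hf, hfP⟩ := exists_injective_of_forall_part hP
    (R := fun p y z => (y = v → z = u) ∧ (G.Adj u z → G.Adj v y → HasSpanningCycle G (p₀ ∪ p)))
    hsucc
  have hfv : f v = u := (hfP p₀ hp₀ v hpath.symm.left_mem).1 rfl
  obtain ⟨y, huf, hvy⟩ := exists_adj_apply_and_adj hf hfv hdeg
  obtain ⟨q, ⟨hq, hyq⟩, -⟩ := hP y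
  exact ⟨q, hq, (hfP q hq y hyq).2 huf hvy⟩

theorem HasCycleCoverLE.of_sup_edge {r : ℕ}
    (hdeg : Fintype.card V ≤ (G.neighborSet u).ncard + (G.neighborSet v).ncard)
    (hcover : HasCycleCoverLE (G ⊔ .edge u v) r) : HasCycleCoverLE G r := by
  classical
  obtain ⟨P, hPr, hP, hcycle⟩ := hcover
  by_cases hG : ∀ p ∈ P, HasSpanningCycle G p
  · exact ⟨P, hPr, hP, hG⟩
  push Not at hG
  obtain ⟨p₀, hp₀, hbroken⟩ := hG
  obtain ⟨hpath, hcard⟩ :=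
    (HasSpanningCycle.or_hasSpanningPath_of_sup_edge (hcycle p₀ hp₀)).resolve_left hbroken
  have hrest : ∀ p ∈ P, p ≠ p₀ → HasSpanningCycle G p := fun p hp hne =>
    (HasSpanningCycle.or_hasSpanningPath_of_sup_edge (hcycle p hp)).resolve_right fun h =>
      hne ((hP u).unique ⟨hp, h.1.left_mem⟩ ⟨hp₀, hpath.left_mem⟩)
  obtain ⟨q, hq, hmerged⟩ := exists_hasSpanningCycle_union hdeg hP hp₀ hpath hcard hrest
  refine ⟨insert (p₀ ∪ q) (P \ {p₀, q}), (card_merge_le hp₀ q).trans hPr,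
    existsUnique_mem_merge hP hp₀ hq, fun p hp => ?_⟩
  obtain rfl | hp := Finset.mem_insert.1 hp
  · exact hmerged
  · simp only [Finset.mem_sdiff, Finset.mem_insert, Finset.mem_singleton, not_or] at hp
    exact hrest p hp.1 hp.2.1

theorem HasCycleCoverLE.mono {H : SimpleGraph V} {r : ℕ} (hGH : G ≤ H)
    (hcover : HasCycleCoverLE G r) : HasCycleCoverLE H r := by
  obtain ⟨P, hPr, hP, hcycle⟩ := hcover
  exact ⟨P, hPr, hP, fun p hp => HasSpanningCycle.mono hGH (hcycle p hp)⟩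

theorem hasCycleCoverLE_sup_edge_iff {r : ℕ}
    (hdeg : Fintype.card V ≤ (G.neighborSet u).ncard + (G.neighborSet v).ncard) :
    HasCycleCoverLE (G ⊔ .edge u v) r ↔ HasCycleCoverLE G r :=
  ⟨.of_sup_edge hdeg, .mono le_sup_left⟩

end Closure

theorem stmt1 {V : Type*} [Fintype V] (n r t : ℕ)
    (hn : Fintype.card V = n) (hr : 0 < r)
    (Gs : ℕ → SimpleGraph V)
    (hstep : ∀ i < t, ∃ u v : V, u ≠ v ∧ ¬ (Gs i).Adj u v ∧
      n ≤ ((Gs i).neighborSet u).ncard + ((Gs i).neighborSet v).ncard ∧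
      Gs (i + 1) = Gs i ⊔ SimpleGraph.fromEdgeSet {s(u, v)}) :
    HasCycleCoverLE (Gs 0) r ↔ HasCycleCoverLE (Gs t) r := by
  induction t with
  | zero => rfl
  | succ k ih =>
    obtain ⟨u, v, -, -, hdeg, hGs⟩ := hstep k k.lt_succ_self
    rw [ih fun i hi => hstep i (hi.trans k.lt_succ_self), hGs]
    exact (hasCycleCoverLE_sup_edge_iff (hn.trans_le hdeg)).symm
end

section
/- Let G be a simple graph and let P = v_1, v_2, ..., v_h be a simple path in G with h ≥ 3. If there exists an index q with 2 < q < h such that v_1 v_q ∈ E(G) and v_{q-1} v_h ∈ E(G), then G contains a cycle whose vertex set is exactly {v_1, v_2, ..., v_h}. -/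
/-!
Deleting the edge `v (q - 1) v q` splits `P` into two disjoint paths, from `v 1` to `v (q - 1)` and
from `v q` to `v h`. The edges `v (q - 1) v h` and `v q v 1` join them into a cycle that traverses
the second path backwards.
-/

section WalkConstructions

open SimpleGraph

variable {V : Type*} {G : SimpleGraph V} {a b c d : V}

theorem exists_isPath_mem_support_iff_mem_image_Icc {v : ℕ → V} {m n : ℕ} (hmn : m ≤ n)
    (hadj : ∀ i ∈ Set.Ico m n, G.Adj (v i) (v (i + 1))) (hinj : Set.InjOn v (Set.Icc m n)) :
    ∃ p : G.Walk (v m) (v n), p.IsPath ∧ ∀ x, x ∈ p.support ↔ x ∈ v '' Set.Icc m n := by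
  induction n, hmn using Nat.le_induction with
  | base => exact ⟨.nil, .nil, by simp⟩
  | succ n hmn ih =>
    have hIcc : Set.Icc m (n + 1) = insert (n + 1) (Set.Icc m n) :=
      (Set.insert_Icc_right_eq_Icc_succ (Nat.le_succ_of_le hmn)).symm
    rw [hIcc, Set.injOn_insert (by simp)] at hinj
    obtain ⟨p, hp, hsupp⟩ := ih (fun i hi ↦ hadj i ⟨hi.1, Nat.lt_succ_of_lt hi.2⟩) hinj.1
    have hlast : G.Adj (v n) (v (n + 1)) := hadj n ⟨hmn, n.lt_succ_self⟩
    refine ⟨p.concat hlast, hp.concat (by rw [hsupp]; exact hinj.2) hlast, fun x ↦ ?_⟩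
    simp only [Walk.support_concat, List.mem_append, List.mem_singleton, hsupp, hIcc,
      Set.image_insert_eq, Set.mem_insert_iff, or_comm]

theorem isPath_append_cons_of_disjoint_support {p : G.Walk a b} {r : G.Walk c d} (hp : p.IsPath)
    (hr : r.IsPath) (hdisj : p.support.Disjoint r.support) (hbc : G.Adj b c) :
    (p.append (.cons hbc r)).IsPath := by
  rw [Walk.isPath_def, Walk.support_append, Walk.support_cons, List.tail_cons]
  exact hp.support_nodup.append hr.support_nodup hdisj

theorem isCycle_cons_of_isPath {p : G.Walk a b} (hp : p.IsPath) (hlen : 2 ≤ p.length)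
    (hba : G.Adj b a) : (Walk.cons hba p).IsCycle := by
  rw [Walk.isCycle_iff_isPath_tail_and_le_length, Walk.length_cons]
  exact ⟨by simpa using hp, by omega⟩

theorem exists_isCycle_of_disjoint_paths {p : G.Walk a b} {r : G.Walk c d} (hp : p.IsPath)
    (hr : r.IsPath) (hdisj : p.support.Disjoint r.support) (hlen : 0 < p.length + r.length)
    (hac : G.Adj a c) (hbd : G.Adj b d) :
    ∃ w : G.Walk c c, w.IsCycle ∧ ∀ x, x ∈ w.support ↔ x ∈ p.support ∨ x ∈ r.support := by
  have hpath : (p.append (.cons hbd r.reverse)).IsPath :=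
    isPath_append_cons_of_disjoint_support hp hr.reverse (by simpa using hdisj) hbd
  refine ⟨.cons hac.symm _, isCycle_cons_of_isPath hpath ?_ hac.symm, fun x ↦ ?_⟩
  · rw [Walk.length_append, Walk.length_cons, Walk.length_reverse]
    omega
  · have hb : b ∈ p.support := p.end_mem_support
    have hc : c ∈ r.support := r.start_mem_support
    simp only [Walk.support_cons, Walk.mem_support_append_iff, Walk.support_reverse,
      List.mem_cons, List.mem_reverse]
    grind

end WalkConstructions

/-- Let `P = v 1, v 2, ..., v h` be a simple path in `G` with `h ≥ 3` (vertices pairwise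
distinct, consecutive vertices adjacent). If there is an index `q` with `2 < q < h` such that
`v 1` is adjacent to `v q` and `v (q-1)` is adjacent to `v h`, then `G` contains a cycle whose
vertex set is exactly `{v 1, ..., v h}`. -/
theorem stmt2 {V : Type*} (G : SimpleGraph V) (h : ℕ) (hh : 3 ≤ h) (v : ℕ → V)
    (hinj : ∀ i j, 1 ≤ i → i ≤ h → 1 ≤ j → j ≤ h → v i = v j → i = j)
    (hadj : ∀ i, 1 ≤ i → i < h → G.Adj (v i) (v (i + 1)))
    (q : ℕ) (hq1 : 2 < q) (hq2 : q < h)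
    (h1q : G.Adj (v 1) (v q)) (hqh : G.Adj (v (q - 1)) (v h)) :
    ∃ (a : V) (c : G.Walk a a), c.IsCycle ∧
      ∀ x, x ∈ c.support ↔ ∃ i, 1 ≤ i ∧ i ≤ h ∧ x = v i := by
  have hIcc : Set.Icc 1 h = Set.Icc 1 (q - 1) ∪ Set.Icc q h := by grind
  have hIcc_disj : Disjoint (Set.Icc 1 (q - 1)) (Set.Icc q h) := by grind
  have hinj' : Set.InjOn v (Set.Icc 1 h) := fun i hi j hj ↦ hinj i j hi.1 hi.2 hj.1 hj.2
  rw [hIcc, Set.injOn_union hIcc_disj] at hinj'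
  obtain ⟨hinj_left, hinj_right, hne⟩ := hinj'
  obtain ⟨p, hp, hpsupp⟩ := exists_isPath_mem_support_iff_mem_image_Icc (G := G)
    (by omega : 1 ≤ q - 1) (fun i hi ↦ hadj i hi.1 (by grind)) hinj_left
  obtain ⟨r, hr, hrsupp⟩ := exists_isPath_mem_support_iff_mem_image_Icc (G := G)
    hq2.le (fun i hi ↦ hadj i (by grind) hi.2) hinj_right
  have hdisj : p.support.Disjoint r.support := fun x hxp hxr ↦
    Set.disjoint_left.mp (Set.disjoint_image_image hne) ((hpsupp x).mp hxp) ((hrsupp x).mp hxr)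
  have hends : v q ≠ v h := fun heq ↦
    hq2.ne (hinj_right (Set.left_mem_Icc.mpr hq2.le) (Set.right_mem_Icc.mpr hq2.le) heq)
  have hlen : 0 < r.length :=
    SimpleGraph.Walk.not_nil_iff_lt_length.mp (SimpleGraph.Walk.not_nil_of_ne hends)
  obtain ⟨c, hc, hcsupp⟩ := exists_isCycle_of_disjoint_paths hp hr hdisj (by omega) h1q hqh
  refine ⟨v q, c, hc, fun x ↦ ?_⟩
  rw [hcsupp, hpsupp, hrsupp, ← Set.mem_union, ← Set.image_union, ← hIcc]
  simp only [Set.mem_image, Set.mem_Icc, and_assoc, eq_comm]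
end

section
/- Let G be a simple graph on n vertices whose vertex set is partitioned into the vertex set of a simple path P = v_1, v_2, ..., v_h with h ≥ 3 and the vertex sets of pairwise vertex-disjoint cycles C_1, ..., C_{r-1} (single vertices counting as trivial cycles), all disjoint from P. Suppose v_1 v_h ∉ E(G) and deg_G(v_1) + deg_G(v_h) ≥ n. Then at least one of the following holds: (i) there exists an index q with 2 < q < h such that v_1 v_q ∈ E(G) and v_{q-1} v_h ∈ E(G); or (ii) there exist an index j and vertices x, y of C_j such that y immediately follows x in the cyclic order of C_j (with y = x when C_j is trivial), x v_1 ∈ E(G), and y v_h ∈ E(G). -/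
/-!
Send each vertex of `P` other than `v h` to its successor on `P`, and each vertex of a cycle to its
predecessor on that cycle. This map is injective and misses `v 1`, so the image `X` of the
neighbours of `v h` has `deg (v h)` elements. Both `X` and the set `Y` of neighbours of `v 1` lie in
`V \ {v 1}`, which has fewer than `deg (v 1) + deg (v h)` elements, so some `x` lies in `X ∩ Y`.
If `x` is on a cycle this is alternative (ii); if `x` is on `P` it is alternative (i), where
`v 1 ≁ v h` excludes `x = v 2` and `x = v h`.
-/

open SimpleGraph

/-- `y` immediately follows `x` in the cyclic order of the closed walk `p`; the single vertex of a
walk of length `0` follows itself. -/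
def IsCyclicSucc {V : Type*} {G : SimpleGraph V} {a : V} (p : G.Walk a a) (x y : V) : Prop :=
  (p.length = 0 ∧ x = a ∧ y = a) ∨
    ∃ i, i < p.length ∧ p.getVert i = x ∧ p.getVert (i + 1) = y

/-- The shift along a sequence `v 1, ..., v h` and closed walks `w j`: `CoverShift h v w y x` says
that `x` succeeds `y` in the sequence or precedes `y` on one of the walks. It is a relation because
`v h` has no image and, without disjointness assumptions, other vertices may have several. -/
def CoverShift {V ι : Type*} {G : SimpleGraph V} (h : ℕ) (v : ℕ → V) {a : ι → V}
    (w : ∀ j, G.Walk (a j) (a j)) (y x : V) : Prop :=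
  (∃ i, 1 ≤ i ∧ i < h ∧ v i = y ∧ v (i + 1) = x) ∨ ∃ j, IsCyclicSucc (w j) x y

section Pigeonhole

variable {V : Type*} [Fintype V] {G : SimpleGraph V} [DecidableRel G.Adj]

theorem exists_adj_adj_of_injOn_of_card_le_degree_add_degree {u v : V} {f : V → V}
    (hinj : Set.InjOn f (G.neighborSet v)) (hu : ∀ y, G.Adj v y → f y ≠ u)
    (hdeg : Fintype.card V ≤ G.degree u + G.degree v) :
    ∃ y, G.Adj v y ∧ G.Adj u (f y) := by
  classical
  have neighbors_subset : G.neighborFinset u ⊆ Finset.univ.erase u := fun x hx =>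
    Finset.mem_erase.2 ⟨((G.mem_neighborFinset u x).1 hx).ne', Finset.mem_univ x⟩
  have image_subset : (G.neighborFinset v).image f ⊆ Finset.univ.erase u := by
    refine Finset.image_subset_iff.2 fun y hy => Finset.mem_erase.2 ⟨?_, Finset.mem_univ _⟩
    exact hu y ((G.mem_neighborFinset v y).1 hy)
  have card_image : ((G.neighborFinset v).image f).card = G.degree v := by
    rw [Finset.card_image_of_injOn (by rwa [coe_neighborFinset]), card_neighborFinset_eq_degree]
  have card_lt : (Finset.univ.erase u).card <
      (G.neighborFinset u).card + ((G.neighborFinset v).image f).card := by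
    rw [card_image, card_neighborFinset_eq_degree]
    exact (Finset.card_erase_lt_of_mem (Finset.mem_univ u)).trans_le hdeg
  obtain ⟨x, hx⟩ :=
    Finset.inter_nonempty_of_card_lt_card_add_card neighbors_subset image_subset card_lt
  obtain ⟨hux, hx⟩ := Finset.mem_inter.1 hx
  obtain ⟨y, hvy, rfl⟩ := Finset.mem_image.1 hx
  exact ⟨y, (G.mem_neighborFinset v y).1 hvy, (G.mem_neighborFinset u _).1 hux⟩

theorem exists_rel_adj_adj_of_card_le_degree_add_degree {u v : V} {R : V → V → Prop}
    (htotal : ∀ y, y ≠ v → ∃ x, R y x) (hunique : Relator.LeftUnique R) (hu : ∀ y, ¬ R y u)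
    (hdeg : Fintype.card V ≤ G.degree u + G.degree v) :
    ∃ y x, R y x ∧ G.Adj v y ∧ G.Adj u x := by
  choose! f hf using htotal
  have rel_of_adj {y : V} (hy : G.Adj v y) : R y (f y) := hf y hy.ne'
  have injOn : Set.InjOn f (G.neighborSet v) := fun y hy y' hy' hyy' =>
    hunique (rel_of_adj hy) (hyy' ▸ rel_of_adj hy')
  have image_ne (y : V) (hy : G.Adj v y) : f y ≠ u := fun hyu => hu y (hyu ▸ rel_of_adj hy)
  obtain ⟨y, hvy, huy⟩ :=
    exists_adj_adj_of_injOn_of_card_le_degree_add_degree injOn image_ne hdeg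
  exact ⟨y, f y, rel_of_adj hvy, hvy, huy⟩

end Pigeonhole

section ClosedWalk

variable {V : Type*} {G : SimpleGraph V} {a : V} {p : G.Walk a a}

theorem getVert_injOn_of_nodup_tail_support (hp : p.support.tail.Nodup) :
    Set.InjOn p.getVert (Set.Iio p.length) := by
  have nodup_dropLast : p.support.dropLast.Nodup :=
    p.tail_support_perm_dropLast_support.nodup_iff.1 hp
  intro i hi j hj hij
  rw [Set.mem_Iio] at hi hj
  rw [p.getVert_eq_support_getElem hi.le, p.getVert_eq_support_getElem hj.le] at hij
  refine (nodup_dropLast.getElem_inj_iff (hi := ?_) (hj := ?_)).1 ?_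
  · simpa using hi
  · simpa using hj
  · simpa only [List.getElem_dropLast] using hij

theorem nodup_tail_support_of_length_eq_zero (hp : p.length = 0) : p.support.tail.Nodup := by
  rw [Walk.nil_iff_support_eq.1 (Walk.length_eq_zero_iff.1 hp)]
  exact List.nodup_nil

theorem exists_isCyclicSucc_of_mem_support {y : V} (hy : y ∈ p.support) :
    ∃ x, IsCyclicSucc p x y := by
  obtain ⟨k, rfl, hk⟩ := Walk.mem_support_iff_exists_getVert.1 hy
  rcases k with - | k
  · rcases hlen : p.length with - | l
    · exact ⟨a, .inl ⟨hlen, rfl, p.getVert_zero⟩⟩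
    · refine ⟨p.getVert l, .inr ⟨l, by lia, rfl, ?_⟩⟩
      rw [← hlen, p.getVert_length, p.getVert_zero]
  · exact ⟨p.getVert k, .inr ⟨k, hk, rfl, rfl⟩⟩

namespace IsCyclicSucc

theorem left_mem_support {x y : V} (hxy : IsCyclicSucc p x y) : x ∈ p.support := by
  rcases hxy with ⟨-, rfl, -⟩ | ⟨i, -, rfl, -⟩
  · exact p.start_mem_support
  · exact p.getVert_mem_support i

theorem rightUnique (hp : p.support.tail.Nodup) : Relator.RightUnique (IsCyclicSucc p) := by
  rintro x y y' (⟨hlen, -, rfl⟩ | ⟨i, hi, rfl, rfl⟩) (⟨hlen', -, rfl⟩ | ⟨i', hi', hii', rfl⟩)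
  · rfl
  · lia
  · lia
  · rw [getVert_injOn_of_nodup_tail_support hp hi' hi hii']

end IsCyclicSucc

end ClosedWalk

namespace CoverShift

variable {V ι : Type*} {G : SimpleGraph V} {h : ℕ} {v : ℕ → V} {a : ι → V}
  {w : ∀ j, G.Walk (a j) (a j)}

theorem exists_of_ne_last
    (hcover : ∀ x, (∃ i, 1 ≤ i ∧ i ≤ h ∧ x = v i) ∨ ∃ j, x ∈ (w j).support)
    {y : V} (hy : y ≠ v h) : ∃ x, CoverShift h v w y x := by
  rcases hcover y with ⟨i, hi, hih, rfl⟩ | ⟨j, hj⟩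
  · have i_ne : i ≠ h := fun hih => hy (congrArg v hih)
    exact ⟨v (i + 1), .inl ⟨i, hi, by lia, rfl, rfl⟩⟩
  · obtain ⟨x, hx⟩ := exists_isCyclicSucc_of_mem_support hj
    exact ⟨x, .inr ⟨j, hx⟩⟩

theorem leftUnique (hinj : Set.InjOn v (Set.Icc 1 h))
    (hcyc : ∀ j, (w j).support.tail.Nodup)
    (hdisjC : ∀ j j', j ≠ j' → ∀ x, x ∈ (w j).support → x ∉ (w j').support)
    (hdisjP : ∀ j i, 1 ≤ i → i ≤ h → v i ∉ (w j).support) :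
    Relator.LeftUnique (CoverShift h v w) := by
  rintro y y' x (⟨i, -, hih, rfl, rfl⟩ | ⟨j, hj⟩) (⟨i', -, hih', rfl, hii'⟩ | ⟨j', hj'⟩)
  · have succ_eq : i' + 1 = i + 1 := hinj ⟨by lia, hih'⟩ ⟨by lia, hih⟩ hii'
    rw [Nat.succ_injective succ_eq]
  · exact absurd hj'.left_mem_support (hdisjP j' (i + 1) (by lia) hih)
  · exact absurd (hii' ▸ hj.left_mem_support) (hdisjP j (i' + 1) (by lia) hih')
  · obtain rfl : j = j' := by
      by_contra hne
      exact hdisjC j j' hne x hj.left_mem_support hj'.left_mem_support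
    exact IsCyclicSucc.rightUnique (hcyc j) hj hj'

theorem not_coverShift_first (hinj : Set.InjOn v (Set.Icc 1 h))
    (hdisjP : ∀ j, v 1 ∉ (w j).support) (y : V) : ¬ CoverShift h v w y (v 1) := by
  rintro (⟨i, hi, hih, -, hi1⟩ | ⟨j, hj⟩)
  · have succ_eq : i + 1 = 1 := hinj ⟨by lia, hih⟩ ⟨le_rfl, by lia⟩ hi1
    lia
  · exact hdisjP j hj.left_mem_support

end CoverShift

theorem stmt4_general {V ι : Type*} [Fintype V] (G : SimpleGraph V) [DecidableRel G.Adj]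
    (h : ℕ) (hh : 1 ≤ h) (v : ℕ → V) (hinj : Set.InjOn v (Set.Icc 1 h))
    (a : ι → V) (w : ∀ j, G.Walk (a j) (a j)) (hcyc : ∀ j, (w j).support.tail.Nodup)
    (hdisjC : ∀ j j', j ≠ j' → ∀ x, x ∈ (w j).support → x ∉ (w j').support)
    (hdisjP : ∀ j i, 1 ≤ i → i ≤ h → v i ∉ (w j).support)
    (hcover : ∀ x, (∃ i, 1 ≤ i ∧ i ≤ h ∧ x = v i) ∨ ∃ j, x ∈ (w j).support)
    (hnadj : ¬ G.Adj (v 1) (v h))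
    (hdeg : Fintype.card V ≤ G.degree (v 1) + G.degree (v h)) :
    (∃ q, 2 < q ∧ q < h ∧ G.Adj (v 1) (v q) ∧ G.Adj (v (q - 1)) (v h)) ∨
    (∃ j x y, IsCyclicSucc (w j) x y ∧ G.Adj x (v 1) ∧ G.Adj y (v h)) := by
  obtain ⟨y, x, hyx, hy, hx⟩ := exists_rel_adj_adj_of_card_le_degree_add_degree
    (fun _ => CoverShift.exists_of_ne_last hcover)
    (CoverShift.leftUnique hinj hcyc hdisjC hdisjP)
    (CoverShift.not_coverShift_first hinj fun j => hdisjP j 1 le_rfl hh) hdeg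
  rcases hyx with ⟨i, hi, hih, rfl, rfl⟩ | ⟨j, hj⟩
  · have i_ne_one : i ≠ 1 := by
      rintro rfl
      exact hnadj hy.symm
    have succ_ne_last : i + 1 ≠ h := by
      rintro rfl
      exact hnadj hx
    exact .inl ⟨i + 1, by lia, by lia, hx, hy.symm⟩
  · exact .inr ⟨j, x, y, hj, hx.symm, hy.symm⟩

/-- Pigeonhole dichotomy: the vertex set of `G` (on `n` vertices) is partitioned into the
vertex set of a simple path `P = v 1, ..., v h` (`h ≥ 3`) and the vertex sets of pairwise
vertex-disjoint cycles `C_1, ..., C_{r-1}` (each represented as a closed walk `w j` that is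
either trivial, i.e. of length `0`, or an honest cycle), all disjoint from `P`.
If `v 1` and `v h` are nonadjacent and `deg (v 1) + deg (v h) ≥ n`, then either
(i) there is `q` with `2 < q < h` such that `v 1 ~ v q` and `v (q-1) ~ v h`, or
(ii) there are a cycle `C_j` and consecutive vertices `x, y` on it (`y` immediately following
`x` in its cyclic order, `y = x` when `C_j` is trivial) with `x ~ v 1` and `y ~ v h`. -/
theorem stmt4 {V : Type*} [Fintype V] (G : SimpleGraph V) [DecidableRel G.Adj]
    (n : ℕ) (hn : Fintype.card V = n)
    (h : ℕ) (hh : 3 ≤ h) (v : ℕ → V)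
    (hinj : ∀ i j, 1 ≤ i → i ≤ h → 1 ≤ j → j ≤ h → v i = v j → i = j)
    (hadjP : ∀ i, 1 ≤ i → i < h → G.Adj (v i) (v (i + 1)))
    (r : ℕ) (hr : 1 ≤ r)
    (a : Fin (r - 1) → V) (w : ∀ j, G.Walk (a j) (a j))
    (hcyc : ∀ j, (w j).length = 0 ∨ (w j).IsCycle)
    (hdisjC : ∀ j j', j ≠ j' → ∀ x, x ∈ (w j).support → x ∉ (w j').support)
    (hdisjP : ∀ j, ∀ i, 1 ≤ i → i ≤ h → v i ∉ (w j).support)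
    (hPnotC : ∀ j, ∀ x, x ∈ (w j).support → ¬ ∃ i, 1 ≤ i ∧ i ≤ h ∧ x = v i)
    (hcover : ∀ x : V, (∃ i, 1 ≤ i ∧ i ≤ h ∧ x = v i) ∨ ∃ j, x ∈ (w j).support)
    (hnadj : ¬ G.Adj (v 1) (v h))
    (hdeg : n ≤ G.degree (v 1) + G.degree (v h)) :
    (∃ q, 2 < q ∧ q < h ∧ G.Adj (v 1) (v q) ∧ G.Adj (v (q - 1)) (v h)) ∨
    (∃ j x y,
      (((w j).length = 0 ∧ x = a j ∧ y = a j) ∨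
        ∃ i, i < (w j).length ∧ (w j).getVert i = x ∧ (w j).getVert (i + 1) = y) ∧
      G.Adj x (v 1) ∧ G.Adj y (v h)) := by
  exact stmt4_general G h (by lia) v (fun i hi j hj => hinj i j hi.1 hi.2 hj.1 hj.2) a w
    (fun j => (hcyc j).elim nodup_tail_support_of_length_eq_zero (·.support_nodup))
    hdisjC hdisjP hcover hnadj (hn ▸ hdeg)
end

section
/- Let ℓ ≥ 0 and k ≥ 0 be integers and let G be a simple graph on n vertices such that the complement of G is k-degenerate and such that every pair of distinct nonadjacent vertices u, v of G satisfies deg_G(u) + deg_G(v) < n + ℓ (i.e., G equals its (n+ℓ)-closure). Then G has a co-vertex cover of size at most 2k + ℓ + 1. -/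
/-!
Work in the complement `H` of `G`, on `n` vertices: `H` is `k`-degenerate, every edge `uv` of `H`
satisfies `n ≤ deg u + deg v + ℓ + 1`, and a vertex cover of `H` is sought. If
`n ≤ 2 * k + ℓ + 1`, all vertices together will do. Otherwise no edge joins two vertices of degree
at most `k`, so the set `S` of vertices of degree greater than `k` is a vertex cover. It is small:
by degeneracy some `v ∈ S` has at most `k` neighbours in `S`, hence has a neighbour `u ∉ S`, and
`n ≤ deg u + deg v + ℓ + 1 ≤ k + (k + (n - |S|)) + ℓ + 1`.
-/

open Finset

section Degenerate

variable {V : Type*} {H : SimpleGraph V} {k m : ℕ}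

/-- `H` is `k`-degenerate: every nonempty finite set of vertices induces a subgraph with a vertex
of degree at most `k`. Induced subgraphs suffice, as deleting edges only lowers degrees. -/
def IsDegenerate (H : SimpleGraph V) [DecidableRel H.Adj] (k : ℕ) : Prop :=
  ∀ A : Finset V, A.Nonempty → ∃ v ∈ A, #{u ∈ A | H.Adj v u} ≤ k

theorem IsDegenerate.exists_degree_le_add_card_sdiff [DecidableEq V] [DecidableRel H.Adj]
    [H.LocallyFinite] (hH : IsDegenerate H k) {S : Finset V} (hS : S.Nonempty) :
    ∃ v ∈ S, H.degree v ≤ k + #(H.neighborFinset v \ S) := by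
  obtain ⟨v, hvS, hv⟩ := hH S hS
  have inter_eq : H.neighborFinset v ∩ S = {u ∈ S | H.Adj v u} := by
    ext u
    simp [and_comm]
  refine ⟨v, hvS, ?_⟩
  rw [← H.card_neighborFinset_eq_degree, ← card_inter_add_card_sdiff (H.neighborFinset v) S,
    inter_eq]
  gcongr

variable [Fintype V]

/-- The vertices of degree greater than `k`, which form the vertex cover of a `k`-degenerate graph
with large degree sums along its edges. -/
def highDegreeVertices (H : SimpleGraph V) [DecidableRel H.Adj] (k : ℕ) : Finset V :=
  {v | k < H.degree v}

variable [DecidableRel H.Adj]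

theorem mem_highDegreeVertices {v : V} : v ∈ highDegreeVertices H k ↔ k < H.degree v := by
  simp [highDegreeVertices]

theorem isVertexCover_highDegreeVertices (hk : 2 * k + m < Fintype.card V)
    (hsum : ∀ u v, H.Adj u v → Fintype.card V ≤ H.degree u + H.degree v + m) :
    H.IsVertexCover (highDegreeVertices H k) := by
  intro u v huv
  have := hsum u v huv
  simp only [mem_coe, mem_highDegreeVertices]
  omega

theorem IsDegenerate.card_highDegreeVertices_le (hH : IsDegenerate H k)
    (hsum : ∀ u v, H.Adj u v → Fintype.card V ≤ H.degree u + H.degree v + m) :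
    #(highDegreeVertices H k) ≤ 2 * k + m := by
  classical
  set S := highDegreeVertices H k
  obtain hempty | hne := S.eq_empty_or_nonempty
  · simp [hempty]
  obtain ⟨v, hvS, hdeg_v⟩ := hH.exists_degree_le_add_card_sdiff hne
  have hk_lt : k < H.degree v := mem_highDegreeVertices.1 hvS
  obtain ⟨u, hu⟩ : (H.neighborFinset v \ S).Nonempty := card_pos.1 (by omega)
  obtain ⟨huv, huS⟩ := mem_sdiff.1 hu
  have hdeg_u : H.degree u ≤ k := not_lt.1 fun h => huS (mem_highDegreeVertices.2 h)
  have hcard_sdiff : #(H.neighborFinset v \ S) + #S ≤ Fintype.card V := by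
    rw [← card_union_of_disjoint sdiff_disjoint]
    exact card_le_univ _
  have := hsum u v ((H.mem_neighborFinset v u).1 huv).symm
  omega

theorem IsDegenerate.exists_isVertexCover_card_le (hH : IsDegenerate H k)
    (hsum : ∀ u v, H.Adj u v → Fintype.card V ≤ H.degree u + H.degree v + m) :
    ∃ S : Finset V, H.IsVertexCover S ∧ #S ≤ 2 * k + m := by
  obtain hsmall | hlarge := le_or_gt (Fintype.card V) (2 * k + m)
  · exact ⟨univ, by simp, hsmall⟩
  · exact ⟨highDegreeVertices H k, isVertexCover_highDegreeVertices hlarge hsum,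
      hH.card_highDegreeVertices_le hsum⟩

end Degenerate

section Complement

variable {V : Type*} {G : SimpleGraph V}

theorem isDegenerate_compl_iff [DecidableEq V] [DecidableRel G.Adj] {k : ℕ} :
    IsDegenerate Gᶜ k ↔ ∀ A : Finset V, A.Nonempty →
      ∃ v ∈ A, #{u ∈ A | u ≠ v ∧ ¬ G.Adj v u} ≤ k := by
  simp only [IsDegenerate, SimpleGraph.compl_adj, ne_comm]

theorem isVertexCover_compl_iff {S : Set V} :
    Gᶜ.IsVertexCover S ↔ ∀ u v, u ∉ S → v ∉ S → u ≠ v → G.Adj u v := by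
  simp only [SimpleGraph.IsVertexCover, SimpleGraph.compl_adj]
  grind

variable (G) in
theorem degree_add_degree_compl_add_one [Fintype V] [DecidableEq V] [DecidableRel G.Adj] (v : V) :
    G.degree v + Gᶜ.degree v + 1 = Fintype.card V := by
  have := G.degree_compl v
  have := G.degree_lt_card_verts v
  omega

end Complement

/-- If the complement of `G` is `k`-degenerate (every nonempty induced subgraph of the
complement has a vertex of degree at most `k`) and `G` equals its `(n+ℓ)`-closure (no pair of
distinct nonadjacent vertices has degree sum at least `n + ℓ`), then `G` has a co-vertex
cover of size at most `2k + ℓ + 1`, i.e. a set `S` of vertices whose complement is a clique. -/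
theorem stmt5 {V : Type*} [Fintype V] [DecidableEq V] (G : SimpleGraph V)
    [DecidableRel G.Adj] (n k ℓ : ℕ) (hn : Fintype.card V = n)
    (hdegen : ∀ A : Finset V, A.Nonempty →
      ∃ v ∈ A, (A.filter fun u => u ≠ v ∧ ¬ G.Adj v u).card ≤ k)
    (hclosed : ∀ u v : V, u ≠ v → ¬ G.Adj u v → G.degree u + G.degree v < n + ℓ) :
    ∃ S : Finset V, (∀ u v : V, u ∉ S → v ∉ S → u ≠ v → G.Adj u v) ∧
      S.card ≤ 2 * k + ℓ + 1 := by
  have hsum : ∀ u v, Gᶜ.Adj u v →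
      Fintype.card V ≤ Gᶜ.degree u + Gᶜ.degree v + (ℓ + 1) := by
    intro u v huv
    obtain ⟨hne, hnadj⟩ := (G.compl_adj u v).1 huv
    have := hclosed u v hne hnadj
    have := degree_add_degree_compl_add_one G u
    have := degree_add_degree_compl_add_one G v
    omega
  obtain ⟨S, hcover, hcard⟩ :=
    (isDegenerate_compl_iff.2 hdegen).exists_isVertexCover_card_le hsum
  exact ⟨S, isVertexCover_compl_iff.1 hcover, hcard⟩
end

section
/- Let G be a simple graph and let S be a nonempty co-vertex cover of G. Then there exists a set C' ⊆ V(G) \ S with |S ∪ C'| ≤ 3|S| such that for every positive integer r, G has a cycle cover of size at most r if and only if the induced subgraph G[S ∪ C'] has a cycle cover of size at most r. -/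
/-!
Let `C` be the clique outside `S`. Choosing `X ⊆ S` to minimise `|N(X) ∩ C| + 2 |S \ X|`, we have
`|N(X) ∩ C| ≤ 2 |X|`, and Hall's theorem gives every vertex of `S \ X` two private neighbours in
`C \ N(X)`. The kernel consists of `S`, `N(X) ∩ C` and the private neighbours, padded to
`2 |S|` clique vertices.

To move a cover between `G` and the kernel, open every cycle that has two consecutive vertices
outside `X` and join the resulting paths to a single sequence, in which consecutive vertices are
adjacent or both outside `X`. There are too many vertices outside `X` for no cycle to be opened, so
at least one unit of the budget `r` is left for this sequence. Vertices of `C \ N(X)` can be deleted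
from it, and clique vertices can be inserted into it. Where a vertex of `S \ X` sits next to a
non-neighbour, one of its private neighbours goes in between; the sequence then closes up to a
cycle through the clique. The case `|S| = 1` is treated by hand.
-/

namespace CycleCover

/-! ### Cyclic chains -/

section Chain

variable {α : Type*} {r : α → α → Prop} {l : List α}

theorem cycleChain_coe_iff :
    Cycle.Chain r (l : Cycle α) ↔ l.IsChain r ∧ ∀ x ∈ l.getLast?, ∀ y ∈ l.head?, r x y := by
  cases l with
  | nil => simp
  | cons a l => rw [Cycle.chain_coe_cons, ← List.cons_append, List.isChain_append]; simp

theorem exists_isRotated_of_not_cycleChain (h : ¬ Cycle.Chain r (l : Cycle α)) :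
    ∃ l', l' ~r l ∧ ∃ x ∈ l'.getLast?, ∃ y ∈ l'.head?, ¬ r x y := by
  by_cases hclosing : ∀ x ∈ l.getLast?, ∀ y ∈ l.head?, r x y
  · have hchain : ¬ l.IsChain r := fun hl ↦ h (cycleChain_coe_iff.2 ⟨hl, hclosing⟩)
    rw [List.isChain_iff_forall_rel_of_append_cons_cons] at hchain
    push Not at hchain
    obtain ⟨x, y, l₁, l₂, rfl, hxy⟩ := hchain
    refine ⟨(y :: l₂) ++ (l₁ ++ [x]), ?_, x, ?_, y, by simp, hxy⟩
    · simpa using List.isRotated_append (l := y :: l₂) (l' := l₁ ++ [x])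
    · rw [← List.append_assoc, List.getLast?_concat, Option.mem_some]
  · push Not at hclosing
    exact ⟨l, .refl l, hclosing⟩

theorem exists_rel_of_cycleChain (hl : l.Nodup) (hlen : 3 ≤ l.length)
    (hchain : Cycle.Chain r (l : Cycle α)) {x : α} (hx : x ∈ l) :
    ∃ y ∈ l, ∃ z ∈ l, y ≠ z ∧ r y x ∧ r x z := by
  obtain ⟨l₁, l₂, rfl⟩ := List.append_of_mem hx
  have hrot : (l₁ ++ x :: l₂) ~r (x :: (l₂ ++ l₁)) := by
    simpa using List.isRotated_append (l := l₁) (l' := x :: l₂)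
  rw [Cycle.coe_eq_coe.2 hrot, Cycle.chain_coe_cons] at hchain
  rw [hrot.perm.nodup_iff] at hl
  rw [hrot.perm.length_eq] at hlen
  simp only [hrot.perm.mem_iff]
  obtain ⟨z, m, hm⟩ := List.exists_cons_of_ne_nil
    (List.ne_nil_of_length_pos (l := l₂ ++ l₁) (by grind))
  rw [hm] at hchain hl hlen ⊢
  obtain ⟨m, y, rfl⟩ := List.eq_nil_or_concat' m |>.resolve_left (by grind)
  refine ⟨y, by simp, z, by simp, by grind, ?_, (List.isChain_cons_cons.1 hchain).1⟩
  have : List.IsChain r ((x :: z :: m) ++ y :: x :: []) := by simpa using hchain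
  exact (List.isChain_append_cons_cons.1 this).2.1

theorem countP_le_countP_not_of_isChain {p : α → Prop} [DecidablePred p] {x z : α}
    (h : List.IsChain (fun a b ↦ ¬ (p a ∧ p b)) (x :: (l ++ [z]))) :
    (x :: l).countP p ≤ (l ++ [z]).countP (¬ p ·) := by
  induction l generalizing x with
  | nil =>
    rw [List.nil_append, List.isChain_pair] at h
    by_cases hx : p x <;> simp_all
  | cons y l ih =>
    rw [List.cons_append, List.isChain_cons_cons] at h
    have hyl := ih h.2
    rw [List.countP_cons, List.cons_append, List.countP_cons (l := l ++ [z])]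
    grind

theorem countP_le_countP_not_of_cycleChain {p : α → Prop} [DecidablePred p]
    (h : Cycle.Chain (fun a b ↦ ¬ (p a ∧ p b)) (l : Cycle α)) :
    l.countP p ≤ l.countP (¬ p ·) := by
  cases l with
  | nil => simp
  | cons a l =>
    rw [Cycle.chain_coe_cons] at h
    calc (a :: l).countP p ≤ (l ++ [a]).countP (¬ p ·) := countP_le_countP_not_of_isChain h
      _ = (a :: l).countP (¬ p ·) := (List.perm_append_singleton a l).countP_eq _

end Chain

/-! ### The expansion lemma -/

section Expansion

variable {ι α : Type*} [DecidableEq α]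

theorem exists_pairwiseDisjoint_card_eq {T : Finset ι} {N : ι → Finset α} {k : ℕ}
    (hall : ∀ s ⊆ T, k * s.card ≤ (s.biUnion N).card) :
    ∃ M : ι → Finset α, (∀ t ∈ T, M t ⊆ N t ∧ (M t).card = k) ∧
      (T : Set ι).PairwiseDisjoint M := by
  classical
  have hfiber {t : ι} (ht : t ∈ T) :
      (Finset.univ.filter fun i : T × Fin k ↦ (i.1 : ι) = t).card = k := by
    have : (Finset.univ.filter fun i : T × Fin k ↦ (i.1 : ι) = t) =
        {⟨t, ht⟩} ×ˢ Finset.univ := by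
      ext
      simp only [Finset.mem_filter, Finset.mem_product, Finset.mem_singleton, Finset.mem_univ,
        true_and, and_true, Subtype.ext_iff]
    rw [this, Finset.card_product, Finset.card_singleton, one_mul, Finset.card_fin]
  have hcopies : ∀ s : Finset (T × Fin k), s.card ≤ (s.biUnion fun i ↦ N i.1).card := by
    intro s
    have hsub : (s.image fun i ↦ (i.1 : ι)) ⊆ T := Finset.image_subset_iff.2 fun i _ ↦ i.1.2
    calc s.card ≤ k * (s.image fun i ↦ (i.1 : ι)).card :=
          Finset.card_le_mul_card_image s k fun t ht ↦
            (Finset.card_le_card (Finset.filter_subset_filter _ (Finset.subset_univ s))).trans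
              (hfiber (hsub ht)).le
      _ ≤ ((s.image fun i ↦ (i.1 : ι)).biUnion N).card := hall _ hsub
      _ = (s.biUnion fun i ↦ N i.1).card := by rw [Finset.image_biUnion]
  obtain ⟨f, hf, hfN⟩ := (Finset.all_card_le_biUnion_card_iff_exists_injective _).1 hcopies
  refine ⟨fun t ↦ (Finset.univ.filter fun i : T × Fin k ↦ (i.1 : ι) = t).image f,
    fun t ht ↦ ⟨?_, ?_⟩, fun t _ t' _ htt' ↦ ?_⟩
  · rw [Finset.image_subset_iff]
    exact fun i hi ↦ (Finset.mem_filter.1 hi).2 ▸ hfN i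
  · rw [Finset.card_image_of_injective _ hf, hfiber ht]
  · rw [Function.onFun, Finset.disjoint_image hf]
    exact Finset.disjoint_filter.2 fun i _ hi hi' ↦ htt' (hi.symm.trans hi')

theorem exists_subset_expansion [DecidableEq ι] (S : Finset ι) (N : ι → Finset α) (k : ℕ) :
    ∃ X ⊆ S, (X.biUnion N).card ≤ k * X.card ∧
      ∃ M : ι → Finset α, (∀ t ∈ S \ X, M t ⊆ N t \ X.biUnion N ∧ (M t).card = k) ∧
        ((S \ X : Finset ι) : Set ι).PairwiseDisjoint M := by
  obtain ⟨X, hX, hmin⟩ := S.powerset.exists_min_image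
    (fun X ↦ (X.biUnion N).card + k * (S \ X).card) ⟨∅, by simp⟩
  rw [Finset.mem_powerset] at hX
  have hsplit {Y : Finset ι} (hY : Y ⊆ S) : k * (S \ Y).card + k * Y.card = k * S.card := by
    rw [← mul_add, Finset.card_sdiff_add_card_eq_card hY]
  refine ⟨X, hX, ?_, exists_pairwiseDisjoint_card_eq fun s hs ↦ ?_⟩
  · have := hmin ∅ (by simp)
    simp only [Finset.biUnion_empty, Finset.card_empty, Finset.sdiff_empty] at this
    have := hsplit hX
    omega
  · have hXs : X ∪ s ⊆ S := Finset.union_subset hX (hs.trans Finset.sdiff_subset)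
    have hcard : k * (X ∪ s).card = k * X.card + k * s.card := by
      rw [Finset.card_union_of_disjoint (Finset.disjoint_sdiff.mono_right hs), mul_add]
    have hN : ((X ∪ s).biUnion N).card =
        (X.biUnion N).card + (s.biUnion fun t ↦ N t \ X.biUnion N).card := by
      have hsdiff : (s.biUnion fun t ↦ N t \ X.biUnion N) = s.biUnion N \ X.biUnion N := by
        ext; simp only [Finset.mem_biUnion, Finset.mem_sdiff]; tauto
      rw [hsdiff, Finset.union_biUnion, add_comm, Finset.card_sdiff_add_card, Finset.union_comm]
    have := hmin (X ∪ s) (Finset.mem_powerset.2 hXs)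
    have := hsplit hX
    have := hsplit hXs
    omega

end Expansion

/-! ### Covers as lists of lists -/

variable {V : Type*} {G : SimpleGraph V}

/-- The list `l` runs through the elements of `A`, each exactly once. -/
def Enumerates (l : List V) (A : Finset V) : Prop :=
  l.Nodup ∧ ∀ v, v ∈ l ↔ v ∈ A

theorem Enumerates.toList (A : Finset V) : Enumerates A.toList A :=
  ⟨A.nodup_toList, by simp⟩

theorem Enumerates.of_perm {l l' : List V} {A : Finset V} (h : Enumerates l A)
    (hperm : l'.Perm l) : Enumerates l' A :=
  ⟨hperm.nodup_iff.2 h.1, fun v ↦ by rw [hperm.mem_iff, h.2]⟩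

theorem Enumerates.append [DecidableEq V] {l l' : List V} {A B : Finset V} (h : Enumerates l A)
    (h' : Enumerates l' B) (hAB : Disjoint A B) : Enumerates (l ++ l') (A ∪ B) := by
  refine ⟨h.1.append h'.1 fun v hv hv' ↦ ?_, fun v ↦ ?_⟩
  · exact Finset.disjoint_left.1 hAB ((h.2 v).1 hv) ((h'.2 v).1 hv')
  · rw [List.mem_append, Finset.mem_union, h.2, h'.2]

theorem Enumerates.length_eq {l : List V} {A : Finset V} (h : Enumerates l A) :
    l.length = A.card := by
  classical
  rw [← List.toFinset_card_of_nodup h.1]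
  congr 1
  ext v
  simp [h.2]

/-- The list `l` traverses a cycle of `G` in cyclic order, a single vertex counting as a cycle.
Distinctness of the entries is left to `Enumerates`. -/
def IsCycleList (G : SimpleGraph V) (l : List V) : Prop :=
  l.length = 1 ∨ 3 ≤ l.length ∧ Cycle.Chain G.Adj (l : Cycle V)

/-- `G[A]` has a cycle cover of size at most `r`, each cycle being given as a list of vertices. -/
def HasListCover (G : SimpleGraph V) (A : Finset V) (r : ℕ) : Prop :=
  ∃ ls : List (List V), ls.length ≤ r ∧ Enumerates ls.flatten A ∧ ∀ l ∈ ls, IsCycleList G l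

theorem exists_isCycle_of_cycleChain {l : List V} (hlen : 3 ≤ l.length) (hl : l.Nodup)
    (hchain : Cycle.Chain G.Adj (l : Cycle V)) :
    ∃ a : V, ∃ c : G.Walk a a, c.IsCycle ∧ ∀ x, x ∈ l ↔ x ∈ c.support := by
  obtain ⟨a, l, rfl⟩ :=
    List.exists_cons_of_ne_nil (List.ne_nil_of_length_pos (l := l) (by omega))
  rw [Cycle.chain_coe_cons] at hchain
  let c : G.Walk a a :=
    (SimpleGraph.Walk.ofSupport _ (List.cons_ne_nil _ _) hchain).copy (by simp) (by simp)
  have hsupport : c.support = a :: (l ++ [a]) :=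
    (SimpleGraph.Walk.support_copy ..).trans (SimpleGraph.Walk.support_ofSupport ..)
  have hlength : c.length = l.length + 1 := by
    simpa [SimpleGraph.Walk.length_support] using congrArg List.length hsupport
  refine ⟨a, c, SimpleGraph.Walk.isCycle_iff_isPath_tail_and_le_length.2 ⟨?_, by grind⟩, ?_⟩
  · have hnil : ¬ c.Nil := by simp [← SimpleGraph.Walk.length_eq_zero_iff, hlength]
    rw [SimpleGraph.Walk.isPath_def, SimpleGraph.Walk.support_tail_of_not_nil _ hnil, hsupport,
      List.tail_cons]
    exact (List.perm_append_singleton a l).nodup_iff.2 hl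
  · grind

theorem isCycleList_dropLast_support {a : V} {c : G.Walk a a} (hc : c.IsCycle) :
    IsCycleList G c.support.dropLast := by
  cases c with
  | nil => simp at hc
  | cons hadj p =>
    have hlast : p.support.dropLast ++ [a] = p.support := by simp
    have hchain := (SimpleGraph.Walk.cons hadj p).isChain_adj_support
    have hlen := hc.three_le_length
    rw [SimpleGraph.Walk.support_cons] at hchain ⊢
    rw [List.dropLast_cons_of_ne_nil p.support_ne_nil]
    refine .inr ⟨by simpa using hlen, ?_⟩
    rwa [Cycle.chain_coe_cons, hlast]

theorem mem_dropLast_support_iff {a : V} {c : G.Walk a a} (hc : ¬ c.Nil) {x : V} :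
    x ∈ c.support.dropLast ↔ x ∈ c.support := by
  cases c with
  | nil => simp at hc
  | cons hadj p =>
    have hlast : p.support.dropLast ++ [a] = p.support := by simp
    rw [SimpleGraph.Walk.support_cons, List.dropLast_cons_of_ne_nil p.support_ne_nil,
      List.mem_cons, List.mem_cons]
    grind

theorem exists_isCycleList_enumerates {p : Finset V}
    (hp : (∃ x, p = {x}) ∨ ∃ a : V, ∃ c : G.Walk a a, c.IsCycle ∧ ∀ x, x ∈ p ↔ x ∈ c.support) :
    ∃ l : List V, IsCycleList G l ∧ Enumerates l p := by
  rcases hp with ⟨x, rfl⟩ | ⟨a, c, hc, hp⟩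
  · exact ⟨[x], .inl rfl, by simp, by simp⟩
  · refine ⟨_, isCycleList_dropLast_support hc, hc.nodup_dropLast_support, fun x ↦ ?_⟩
    rw [mem_dropLast_support_iff hc.not_nil, hp]

theorem HasListCover.of_hasCycleCoverLE [Fintype V] {r : ℕ} (h : HasCycleCoverLE G r) :
    HasListCover G Finset.univ r := by
  obtain ⟨P, hr, hpartition, hP⟩ := h
  choose! f hcycle henum using fun p hp ↦ exists_isCycleList_enumerates (hP p hp)
  refine ⟨P.toList.map f, by simpa using hr, ⟨?_, fun v ↦ ?_⟩, by simpa using hcycle⟩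
  · rw [List.nodup_flatten, List.pairwise_map]
    refine ⟨by simpa using fun p hp ↦ (henum p hp).1, P.nodup_toList.imp_of_mem ?_⟩
    intro p q hp hq hpq x hxp hxq
    rw [Finset.mem_toList] at hp hq
    rw [(henum p hp).2] at hxp
    rw [(henum q hq).2] at hxq
    exact hpq ((hpartition x).unique ⟨hp, hxp⟩ ⟨hq, hxq⟩)
  · obtain ⟨p, ⟨hp, hv⟩, -⟩ := hpartition v
    simpa using ⟨p, hp, ((henum p hp).2 v).2 hv⟩

theorem HasListCover.hasCycleCoverLE [Fintype V] {r : ℕ} (h : HasListCover G Finset.univ r) :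
    HasCycleCoverLE G r := by
  classical
  obtain ⟨ls, hr, ⟨hnodup, hmem⟩, hcycle⟩ := h
  rw [List.nodup_flatten] at hnodup
  refine ⟨(ls.map List.toFinset).toFinset, (List.toFinset_card_le _).trans (by simpa using hr),
    fun v ↦ ?_, ?_⟩
  · obtain ⟨l, hl, hv⟩ := List.mem_flatten.1 ((hmem v).2 (Finset.mem_univ v))
    refine ⟨l.toFinset, ⟨by simpa using ⟨l, hl, rfl⟩, by simpa using hv⟩, ?_⟩
    rintro q ⟨hq, hvq⟩
    obtain ⟨l', hl', rfl⟩ : ∃ l' ∈ ls, l'.toFinset = q := by simpa using hq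
    by_contra hne
    have : Std.Symm (List.Disjoint (α := V)) := ⟨fun _ _ h ↦ h.symm⟩
    exact hnodup.2.forall hl' hl (fun h ↦ hne (h ▸ rfl)) (by simpa using hvq) hv
  · intro p hp
    obtain ⟨l, hl, rfl⟩ : ∃ l ∈ ls, l.toFinset = p := by simpa using hp
    rcases hcycle l hl with hlen | ⟨hlen, hchain⟩
    · obtain ⟨x, rfl⟩ := List.length_eq_one_iff.1 hlen
      exact .inl ⟨x, by simp⟩
    · obtain ⟨a, c, hc, hsupport⟩ := exists_isCycle_of_cycleChain hlen (hnodup.1 l hl) hchain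
      exact .inr ⟨a, c, hc, by simpa using hsupport⟩

theorem hasCycleCoverLE_iff [Fintype V] {r : ℕ} :
    HasCycleCoverLE G r ↔ HasListCover G Finset.univ r :=
  ⟨.of_hasCycleCoverLE, HasListCover.hasCycleCoverLE⟩

theorem isCycleList_map_val_iff {A : Set V} {l : List A} :
    IsCycleList G (l.map Subtype.val) ↔ IsCycleList (G.induce A) l := by
  rw [IsCycleList, ← Cycle.map_coe, Cycle.chain_map, List.length_map]
  rfl

theorem enumerates_map_val_iff {A : Finset V} {l : List (A : Set V)} :
    Enumerates (l.map Subtype.val) A ↔ Enumerates l Finset.univ := by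
  rw [Enumerates, Enumerates, List.nodup_map_iff Subtype.val_injective]
  refine and_congr_right fun _ ↦ ⟨fun h v ↦ ?_, fun h v ↦ ?_⟩
  · simpa using (h v).2 v.2
  · simp [(h _).2 (Finset.mem_univ _)]

theorem hasCycleCoverLE_induce_iff {A : Finset V} {r : ℕ} :
    HasCycleCoverLE (G.induce (A : Set V)) r ↔ HasListCover G A r := by
  rw [hasCycleCoverLE_iff]
  constructor
  · rintro ⟨ls, hr, henum, hcycle⟩
    refine ⟨ls.map (List.map Subtype.val), by simpa using hr, ?_, ?_⟩
    · rwa [← List.map_flatten, enumerates_map_val_iff]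
    · simpa only [List.forall_mem_map, isCycleList_map_val_iff] using hcycle
  · rintro ⟨ls, hr, henum, hcycle⟩
    have hmem : ∀ l ∈ ls, ∀ x ∈ l, x ∈ (A : Set V) := fun l hl x hx ↦
      (henum.2 x).1 (List.mem_flatten.2 ⟨l, hl, hx⟩)
    lift ls to List (List (A : Set V)) using hmem
    rw [← List.map_flatten, enumerates_map_val_iff] at henum
    exact ⟨ls, by simpa using hr, henum,
      by simpa only [List.forall_mem_map, isCycleList_map_val_iff] using hcycle⟩

/-! ### Linked paths and rigid cycles -/

/-- Adjacency in the graph obtained from `G` by joining all vertices outside `X`. -/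
def Linked (G : SimpleGraph V) (X : Finset V) (a b : V) : Prop :=
  G.Adj a b ∨ a ∉ X ∧ b ∉ X

/-- A list of paths of `G` with both ends outside `X`, written one after the other:
consecutive vertices are adjacent or both outside `X`. The empty list is allowed. -/
structure IsLinkedPath (G : SimpleGraph V) (X : Finset V) (l : List V) : Prop where
  isChain : l.IsChain (Linked G X)
  head_notMem : ∀ x ∈ l.head?, x ∉ X
  getLast_notMem : ∀ x ∈ l.getLast?, x ∉ X

/-- A cycle of `G`, possibly a single vertex, of which `X` is a vertex cover. Unlike all other
cycles, it cannot be opened up to an `IsLinkedPath`. -/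
def IsRigidCycle (G : SimpleGraph V) (X : Finset V) (l : List V) : Prop :=
  (∃ x ∈ X, l = [x]) ∨
    3 ≤ l.length ∧ Cycle.Chain (fun a b ↦ G.Adj a b ∧ (a ∈ X ∨ b ∈ X)) (l : Cycle V)

variable {X : Finset V} {l l₁ l₂ : List V}

theorem Linked.symm {a b : V} (h : Linked G X a b) : Linked G X b a :=
  h.imp .symm And.symm

theorem isChain_linked_reverse (h : l.IsChain (Linked G X)) : l.reverse.IsChain (Linked G X) :=
  List.isChain_reverse.2 (h.imp fun _ _ ↦ .symm)

theorem isChain_linked_insert [DecidableEq V] {t : V} (ht : t ∉ l)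
    (h : l.IsChain (Linked G X)) : l.IsChain (Linked G (insert t X)) :=
  h.imp_of_mem_imp fun a b ha hb hab ↦ hab.imp_right (by grind)

theorem IsLinkedPath.of_forall_notMem (h : ∀ x ∈ l, x ∉ X) : IsLinkedPath G X l where
  isChain := (List.pairwise_of_forall_mem_list fun a ha b hb ↦ .inr ⟨h a ha, h b hb⟩).isChain
  head_notMem x hx := h x (List.mem_of_mem_head? hx)
  getLast_notMem x hx := h x (List.mem_of_mem_getLast? hx)

theorem IsLinkedPath.append (h₁ : IsLinkedPath G X l₁) (h₂ : IsLinkedPath G X l₂) :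
    IsLinkedPath G X (l₁ ++ l₂) where
  isChain := List.isChain_append.2 ⟨h₁.isChain, h₂.isChain, fun x hx y hy ↦
    .inr ⟨h₁.getLast_notMem x hx, h₂.head_notMem y hy⟩⟩
  head_notMem x hx := by
    rw [List.head?_append, Option.mem_def, Option.or_eq_some_iff] at hx
    exact hx.elim (h₁.head_notMem x) fun hx ↦ h₂.head_notMem x hx.2
  getLast_notMem x hx := by
    rw [List.getLast?_append, Option.mem_def, Option.or_eq_some_iff] at hx
    exact hx.elim (h₂.getLast_notMem x) fun hx ↦ h₁.getLast_notMem x hx.2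

theorem IsLinkedPath.of_append_cons {v : V} (hv : ∀ a, G.Adj a v → a ∉ X)
    (h : IsLinkedPath G X (l₁ ++ v :: l₂)) : IsLinkedPath G X (l₁ ++ l₂) := by
  have hlinked {a : V} (ha : Linked G X a v) : a ∉ X := ha.elim (hv a) And.left
  have hchain := List.isChain_append.1 h.isChain
  refine .append ⟨hchain.1, ?_, ?_⟩ ⟨hchain.2.1.tail, ?_, ?_⟩
  · exact fun x hx ↦ h.head_notMem x (by simp_all)
  · exact fun x hx ↦ hlinked (hchain.2.2 x hx v rfl)
  · exact fun x hx ↦ hlinked (hchain.2.1.rel_head? hx).symm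
  · exact fun x hx ↦ h.getLast_notMem x (by simp_all [List.getLast?_cons])

theorem IsLinkedPath.insert_of_notMem [DecidableEq V] {t : V} (ht : t ∉ l)
    (h : IsLinkedPath G X l) : IsLinkedPath G (insert t X) l where
  isChain := isChain_linked_insert ht h.isChain
  head_notMem x hx := by grind [h.head_notMem x hx, List.mem_of_mem_head? hx]
  getLast_notMem x hx := by grind [h.getLast_notMem x hx, List.mem_of_mem_getLast? hx]

theorem exists_isChain_linked_insert_cons [DecidableEq V] {t m : V} (hadj : G.Adj t m)
    (hm : m ∉ X) (ht : t ∉ l) (hchain : (t :: l).IsChain (Linked G X))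
    (hlast : ∀ x ∈ (t :: l).getLast?, x ∉ X) :
    ∃ q, q.Sublist [m] ∧ (t :: (q ++ l)).IsChain (Linked G (insert t X)) ∧
      ∀ x ∈ (t :: (q ++ l)).getLast?, x ∉ insert t X := by
  have hm' : m ∉ insert t X := by simp [hm, hadj.ne']
  cases l with
  | nil => exact ⟨[m], .refl _, by simpa using .inl hadj, by simpa using hm'⟩
  | cons b l =>
    have htail : (b :: l).IsChain (Linked G (insert t X)) := isChain_linked_insert ht hchain.tail
    have hlast' : ∀ x ∈ (b :: l).getLast?, x ∉ insert t X := by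
      intro x hx
      grind [List.mem_of_mem_getLast? hx, hlast x (by simpa using hx)]
    rcases (List.isChain_cons_cons.1 hchain).1 with htb | ⟨-, hb⟩
    · exact ⟨[], by simp, htail.cons_cons (.inl htb), by simpa using hlast'⟩
    · have hb' : b ∉ insert t X := by grind
      exact ⟨[m], .refl _, (htail.cons_cons (.inr ⟨hm', hb'⟩)).cons_cons (.inl hadj),
        by simpa using hlast'⟩

theorem IsLinkedPath.exists_insert [DecidableEq V] {t m₁ m₂ : V} (hadj₁ : G.Adj t m₁)
    (hadj₂ : G.Adj t m₂) (hm₁ : m₁ ∉ X) (hm₂ : m₂ ∉ X) (ht₁ : t ∉ l₁) (ht₂ : t ∉ l₂)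
    (h : IsLinkedPath G X (l₁ ++ t :: l₂)) :
    ∃ p q, p.Sublist [m₁] ∧ q.Sublist [m₂] ∧
      IsLinkedPath G (insert t X) (l₁ ++ p ++ t :: (q ++ l₂)) := by
  obtain ⟨hchain₁, hchain₂⟩ := List.isChain_split.1 h.isChain
  obtain ⟨q, hq, hq_chain, hq_last⟩ := exists_isChain_linked_insert_cons hadj₂ hm₂ ht₂ hchain₂
    fun x hx ↦ h.getLast_notMem x (by simp_all)
  obtain ⟨p, hp, hp_chain, hp_last⟩ := exists_isChain_linked_insert_cons (l := l₁.reverse) hadj₁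
    hm₁ (by simpa) (by simpa using isChain_linked_reverse hchain₁) fun x hx ↦
      h.head_notMem x (by simpa [List.getLast?_cons] using hx)
  refine ⟨p.reverse, q, by simpa using hp.reverse, hq, List.isChain_split.2 ⟨?_, hq_chain⟩, ?_, ?_⟩
  · simpa using isChain_linked_reverse hp_chain
  · intro x hx
    exact hp_last x (by simpa [List.getLast?_cons] using hx)
  · intro x hx
    exact hq_last x (by simpa using hx)

theorem IsRigidCycle.isCycleList (h : IsRigidCycle G X l) : IsCycleList G l := by
  rcases h with ⟨x, -, rfl⟩ | ⟨hlen, hchain⟩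
  · exact .inl rfl
  · exact .inr ⟨hlen, hchain.imp fun _ _ ↦ And.left⟩

theorem IsRigidCycle.mono {Y : Finset V} (hXY : X ⊆ Y) (h : IsRigidCycle G X l) :
    IsRigidCycle G Y l := by
  rcases h with ⟨x, hx, rfl⟩ | ⟨hlen, hchain⟩
  · exact .inl ⟨x, hXY hx, rfl⟩
  · exact .inr ⟨hlen, hchain.imp fun _ _ ↦ And.imp_right (Or.imp (hXY ·) (hXY ·))⟩

theorem IsRigidCycle.exists_ne_adj_of_notMem (h : IsRigidCycle G X l) (hl : l.Nodup) {v : V}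
    (hv : v ∈ l) (hvX : v ∉ X) : ∃ y ∈ X, ∃ z ∈ X, y ≠ z ∧ G.Adj y v ∧ G.Adj z v := by
  rcases h with ⟨x, hx, rfl⟩ | ⟨hlen, hchain⟩
  · exact absurd (List.mem_singleton.1 hv ▸ hx) hvX
  · obtain ⟨y, -, z, -, hyz, hy, hz⟩ := exists_rel_of_cycleChain hl hlen hchain hv
    exact ⟨y, hy.2.resolve_right hvX, z, hz.2.resolve_left hvX, hyz, hy.1, hz.1.symm⟩

theorem IsRigidCycle.countP_notMem_le [DecidableEq V] (h : IsRigidCycle G X l) :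
    l.countP (· ∉ X) ≤ l.countP (· ∈ X) := by
  rcases h with ⟨x, hx, rfl⟩ | ⟨-, hchain⟩
  · simp [hx]
  · simpa using countP_le_countP_not_of_cycleChain (p := (· ∉ X))
      (hchain.imp fun a b hab ↦ by tauto)

theorem countP_flatten_notMem_le_of_isRigidCycle [DecidableEq V] {us : List (List V)}
    (h : ∀ u ∈ us, IsRigidCycle G X u) :
    us.flatten.countP (· ∉ X) ≤ us.flatten.countP (· ∈ X) := by
  rw [List.countP_flatten, List.countP_flatten]
  exact List.sum_le_sum fun u hu ↦ (h u hu).countP_notMem_le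

theorem card_le_card_of_isRigidCycle {us : List (List V)} (h : ∀ u ∈ us, IsRigidCycle G X u)
    (hus : us.flatten.Nodup) {B : Finset V} (hBX : Disjoint B X) (hB : ∀ v ∈ B, v ∈ us.flatten) :
    B.card ≤ X.card := by
  classical
  calc B.card ≤ (us.flatten.filter (· ∉ X)).toFinset.card :=
        Finset.card_le_card fun v hv ↦ by
          simpa [Finset.disjoint_left.1 hBX hv] using hB v hv
    _ ≤ us.flatten.countP (· ∉ X) := by
        rw [List.countP_eq_length_filter]
        exact List.toFinset_card_le _
    _ ≤ us.flatten.countP (· ∈ X) := countP_flatten_notMem_le_of_isRigidCycle h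
    _ = (us.flatten.filter (· ∈ X)).toFinset.card := by
        rw [List.countP_eq_length_filter, List.toFinset_card_of_nodup (hus.filter _)]
    _ ≤ X.card := Finset.card_le_card fun v hv ↦ by
        simpa using (List.mem_filter.1 (List.mem_toFinset.1 hv)).2

theorem IsCycleList.isRigidCycle_or_exists_isLinkedPath (X : Finset V) (h : IsCycleList G l) :
    IsRigidCycle G X l ∨ ∃ l', l'.Perm l ∧ IsLinkedPath G X l' := by
  rcases h with hlen | ⟨hlen, hchain⟩
  · obtain ⟨x, rfl⟩ := List.length_eq_one_iff.1 hlen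
    by_cases hx : x ∈ X
    · exact .inl (.inl ⟨x, hx, rfl⟩)
    · exact .inr ⟨[x], .refl _, .of_forall_notMem (by simpa)⟩
  · refine or_iff_not_imp_left.2 fun hrigid ↦ ?_
    have hnot : ¬ Cycle.Chain (fun a b ↦ G.Adj a b ∧ (a ∈ X ∨ b ∈ X)) (l : Cycle V) :=
      fun hl ↦ hrigid (.inr ⟨hlen, hl⟩)
    obtain ⟨l', hrot, x, hx, y, hy, hxy⟩ := exists_isRotated_of_not_cycleChain hnot
    rw [← Cycle.coe_eq_coe.2 hrot, cycleChain_coe_iff] at hchain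
    have hxy' : x ∉ X ∧ y ∉ X := by simpa [hchain.2 x hx y hy] using hxy
    exact ⟨l', hrot.perm, hchain.1.imp fun _ _ ↦ .inl, fun z hz ↦ Option.mem_unique hz hy ▸ hxy'.2,
      fun z hz ↦ Option.mem_unique hz hx ▸ hxy'.1⟩

theorem exists_isLinkedPath_perm_flatten {ls : List (List V)}
    (h : ∀ l ∈ ls, ∃ l', l'.Perm l ∧ IsLinkedPath G X l') :
    ∃ L, L.Perm ls.flatten ∧ IsLinkedPath G X L := by
  induction ls with
  | nil => exact ⟨[], .nil, .of_forall_notMem (by simp)⟩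
  | cons l ls ih =>
    obtain ⟨l', hl', hlinked'⟩ := h l List.mem_cons_self
    obtain ⟨L, hL, hlinked⟩ := ih fun l hl ↦ h l (List.mem_cons_of_mem _ hl)
    exact ⟨l' ++ L, hl'.append hL, hlinked'.append hlinked⟩

theorem IsLinkedPath.isChain_adj (hclique : G.IsClique (X : Set V)ᶜ) (h : IsLinkedPath G X l)
    (hl : l.Nodup) : l.IsChain G.Adj := by
  rw [List.isChain_iff_forall_rel_of_append_cons_cons]
  rintro a b l₁ l₂ rfl
  rcases (List.isChain_append_cons_cons.1 h.isChain).2.1 with hab | ⟨ha, hb⟩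
  · exact hab
  · exact hclique ha hb (by grind)

theorem IsLinkedPath.isCycleList (hclique : G.IsClique (X : Set V)ᶜ) (h : IsLinkedPath G X l)
    (hl : l.Nodup) (hnil : l ≠ []) (hlen : l.length ≠ 2) : IsCycleList G l := by
  obtain ⟨a, m, rfl⟩ := List.exists_cons_of_ne_nil hnil
  obtain rfl | ⟨m, b, rfl⟩ := List.eq_nil_or_concat' m
  · exact .inl rfl
  · have hclosing : G.Adj b a :=
      hclique (h.getLast_notMem b (by simp [List.getLast?_cons])) (h.head_notMem a rfl) (by grind)
    refine .inr ⟨by grind, cycleChain_coe_iff.2 ⟨h.isChain_adj hclique hl, ?_⟩⟩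
    simpa [List.getLast?_cons] using hclosing

/-! ### Expansions in graphs -/

section GraphExpansion

/-- A `k`-expansion of `T` into `R`: each `t ∈ T` has a set `M t` of `k` neighbours in `R`, and
these sets are disjoint. -/
structure IsExpansion (G : SimpleGraph V) (T R : Finset V) (k : ℕ) (M : V → Finset V) :
    Prop where
  subset : ∀ t ∈ T, M t ⊆ R
  card_eq : ∀ t ∈ T, (M t).card = k
  adj : ∀ t ∈ T, ∀ m ∈ M t, G.Adj t m
  pairwiseDisjoint : (T : Set V).PairwiseDisjoint M

variable {T R : Finset V} {k : ℕ} {M : V → Finset V}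

theorem IsExpansion.mono_left {T' : Finset V} (hT : T' ⊆ T) (h : IsExpansion G T R k M) :
    IsExpansion G T' R k M where
  subset t ht := h.subset t (hT ht)
  card_eq t ht := h.card_eq t (hT ht)
  adj t ht := h.adj t (hT ht)
  pairwiseDisjoint := h.pairwiseDisjoint.subset (Finset.coe_subset.2 hT)

variable [DecidableEq V]

theorem IsExpansion.biUnion_subset (h : IsExpansion G T R k M) : T.biUnion M ⊆ R :=
  Finset.biUnion_subset.2 h.subset

theorem IsExpansion.card_biUnion (h : IsExpansion G T R k M) :
    (T.biUnion M).card = k * T.card := by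
  rw [Finset.card_biUnion h.pairwiseDisjoint, Finset.sum_congr rfl h.card_eq, Finset.sum_const,
    smul_eq_mul, mul_comm]

theorem exists_isExpansion (G : SimpleGraph V) (S C : Finset V) (k : ℕ) :
    ∃ X ⊆ S, ∃ R ⊆ C, (C \ R).card ≤ k * X.card ∧ (∀ v ∈ R, ∀ a, G.Adj a v → a ∉ X) ∧
      ∃ M, IsExpansion G (S \ X) R k M := by
  classical
  obtain ⟨X, hXS, hcard, M, hM, hdisj⟩ :=
    exists_subset_expansion S (fun v ↦ C.filter (G.Adj v)) k
  refine ⟨X, hXS, C \ X.biUnion fun v ↦ C.filter (G.Adj v), Finset.sdiff_subset, ?_, ?_, M,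
    fun t ht ↦ ?_, fun t ht ↦ (hM t ht).2, fun t ht m hm ↦ ?_, hdisj⟩
  · refine (Finset.card_le_card ?_).trans hcard
    rw [sdiff_sdiff_right_self]
    exact Finset.inter_subset_right
  · intro v hv a hav ha
    rw [Finset.mem_sdiff] at hv
    exact hv.2 (Finset.mem_biUnion.2 ⟨a, ha, Finset.mem_filter.2 ⟨hv.1, hav⟩⟩)
  · exact (hM t ht).1.trans (Finset.sdiff_subset_sdiff (Finset.filter_subset _ _) le_rfl)
  · exact (Finset.mem_filter.1 (Finset.mem_sdiff.1 ((hM t ht).1 hm)).1).2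

end GraphExpansion

/-! ### Skeletons -/

variable {A B : Finset V} {L : List V} {us : List (List V)} {r : ℕ}

/-- What is left of a cycle cover of `G[A]` once every cycle with two consecutive vertices outside
`X` has been opened between them: the opened cycles make up `L`, the remaining ones are `us`. -/
structure IsSkeleton (G : SimpleGraph V) (X A : Finset V) (L : List V) (us : List (List V)) :
    Prop where
  isLinkedPath : IsLinkedPath G X L
  isRigidCycle : ∀ u ∈ us, IsRigidCycle G X u
  enumerates : Enumerates (L ++ us.flatten) A

theorem IsSkeleton.exists_ne_adj_of_notMem (h : IsSkeleton G X A L us) {v : V} (hvA : v ∈ A)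
    (hvL : v ∉ L) (hvX : v ∉ X) :
    us ≠ [] ∧ ∃ y ∈ X, ∃ z ∈ X, y ≠ z ∧ G.Adj y v ∧ G.Adj z v := by
  obtain ⟨u, hu, hvu⟩ := List.mem_flatten.1 <|
    (List.mem_append.1 ((h.enumerates.2 v).2 hvA)).resolve_left hvL
  have hnodup := (List.nodup_flatten.1 h.enumerates.1.of_append_right).1 u hu
  exact ⟨List.ne_nil_of_mem hu, (h.isRigidCycle u hu).exists_ne_adj_of_notMem hnodup hvu hvX⟩

theorem IsSkeleton.adj_of_card_eq_two (h : IsSkeleton G X A L us) (hX : X.card = 2) {v : V}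
    (hvA : v ∈ A) (hvL : v ∉ L) (hvX : v ∉ X) : us ≠ [] ∧ ∀ x ∈ X, G.Adj x v := by
  classical
  obtain ⟨hus, y, hy, z, hz, hyz, hyv, hzv⟩ := h.exists_ne_adj_of_notMem hvA hvL hvX
  have hXyz : {y, z} = X :=
    Finset.eq_of_subset_of_card_le (by grind) (by rw [hX, Finset.card_pair hyz])
  exact ⟨hus, by simpa [← hXyz] using ⟨hyv, hzv⟩⟩

variable [DecidableEq V]

theorem HasListCover.exists_isSkeleton (h : HasListCover G A r) (hcard : X.card < (A \ X).card) :
    ∃ L us, us.length < r ∧ IsSkeleton G X A L us := by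
  classical
  obtain ⟨ls, hr, henum, hcycle⟩ := h
  have hopen : ∀ l ∈ ls.filter (¬ IsRigidCycle G X ·), ∃ l', l'.Perm l ∧ IsLinkedPath G X l' := by
    intro l hl
    rw [List.mem_filter, decide_eq_true_iff] at hl
    exact ((hcycle l hl.1).isRigidCycle_or_exists_isLinkedPath X).resolve_left hl.2
  obtain ⟨L, hL, hlinked⟩ := exists_isLinkedPath_perm_flatten hopen
  have hlt : (ls.filter (IsRigidCycle G X ·)).length < ls.length := by
    rw [List.length_filter_lt_length_iff_exists]
    by_contra! hrigid
    exact hcard.not_ge <| card_le_card_of_isRigidCycle (us := ls) (by simpa using hrigid) henum.1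
      Finset.sdiff_disjoint fun v hv ↦ (henum.2 v).2 (Finset.mem_sdiff.1 hv).1
  refine ⟨L, ls.filter (IsRigidCycle G X ·), hlt.trans_le hr, hlinked, by simp, henum.of_perm ?_⟩
  calc (L ++ (ls.filter (IsRigidCycle G X ·)).flatten).Perm
        ((ls.filter (¬ IsRigidCycle G X ·)).flatten ++ (ls.filter (IsRigidCycle G X ·)).flatten) :=
        hL.append_right _
    _ |>.Perm ((ls.filter (IsRigidCycle G X ·)).flatten ++
        (ls.filter (¬ IsRigidCycle G X ·)).flatten) := List.perm_append_comm
    _ |>.Perm ls.flatten := by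
        rw [← List.flatten_append]
        simpa using (List.filter_append_perm (IsRigidCycle G X ·) ls).flatten

theorem IsSkeleton.exists_erase (h : IsSkeleton G X A L us) {v : V} (hvX : v ∉ X)
    (hv : ∀ a, G.Adj a v → a ∉ X) : ∃ L', IsSkeleton G X (A.erase v) L' us := by
  by_cases hvA : v ∈ A
  swap
  · exact ⟨L, by rwa [Finset.erase_eq_of_notMem hvA]⟩
  have hvL : v ∈ L := by
    by_contra hvL
    obtain ⟨-, y, hy, -, -, -, hyv, -⟩ := h.exists_ne_adj_of_notMem hvA hvL hvX
    exact hv y hyv hy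
  obtain ⟨l₁, l₂, rfl⟩ := List.append_of_mem hvL
  obtain ⟨hnodup, hmem⟩ := h.enumerates
  refine ⟨l₁ ++ l₂, h.isLinkedPath.of_append_cons hv, h.isRigidCycle, ?_, fun w ↦ ?_⟩
  · exact hnodup.sublist (by simp)
  · have hw := hmem w
    have hne : v ∉ l₁ ++ l₂ ++ us.flatten := by grind
    rw [Finset.mem_erase, ← hw]
    grind

theorem IsSkeleton.exists_sdiff (h : IsSkeleton G X A L us) (hBX : Disjoint B X)
    (hB : ∀ v ∈ B, ∀ a, G.Adj a v → a ∉ X) : ∃ L', IsSkeleton G X (A \ B) L' us := by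
  induction B using Finset.induction_on with
  | empty => exact ⟨L, by simpa⟩
  | insert v B _ ih =>
    rw [Finset.disjoint_insert_left] at hBX
    rw [Finset.forall_mem_insert] at hB
    obtain ⟨L', hL'⟩ := ih hBX.2 hB.2
    rw [Finset.sdiff_insert]
    exact hL'.exists_erase hBX.1 hB.1

theorem IsSkeleton.exists_union (h : IsSkeleton G X A L us) (hBX : Disjoint B X) :
    ∃ L', IsSkeleton G X (A ∪ B) L' us := by
  refine ⟨(B \ A).toList ++ L, .append (.of_forall_notMem ?_) h.isLinkedPath, h.isRigidCycle, ?_⟩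
  · intro x hx
    rw [Finset.mem_toList] at hx
    exact Finset.disjoint_left.1 hBX (Finset.mem_sdiff.1 hx).1
  · rw [List.append_assoc, Finset.union_comm, ← Finset.sdiff_union_self_eq_union]
    exact (Enumerates.toList _).append h.enumerates Finset.sdiff_disjoint

theorem IsSkeleton.exists_insert (h : IsSkeleton G X A L us) {t : V} {M : Finset V}
    (hcard : M.card = 2) (hadj : ∀ m ∈ M, G.Adj t m) (hMX : Disjoint M X) (hMA : Disjoint M A) :
    ∃ L', ∃ B ⊆ M, IsSkeleton G (insert t X) (A ∪ B) L' us := by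
  have hrigid : ∀ u ∈ us, IsRigidCycle G (insert t X) u := fun u hu ↦
    (h.isRigidCycle u hu).mono (Finset.subset_insert t X)
  by_cases htL : t ∈ L
  swap
  · exact ⟨L, ∅, by simp, h.isLinkedPath.insert_of_notMem htL, hrigid, by simpa using h.enumerates⟩
  obtain ⟨l₁, l₂, rfl⟩ := List.append_of_mem htL
  obtain ⟨m₁, m₂, hm, rfl⟩ := Finset.card_eq_two.1 hcard
  have hnodup := h.enumerates.1
  rw [Finset.disjoint_insert_left, Finset.disjoint_singleton_left] at hMX
  obtain ⟨p, q, hp, hq, hlinked⟩ := h.isLinkedPath.exists_insert (hadj m₁ (by simp))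
    (hadj m₂ (by simp)) hMX.1 hMX.2 (by grind) (by grind)
  have hperm : (l₁ ++ p ++ t :: (q ++ l₂) ++ us.flatten).Perm
      ((p ++ q) ++ (l₁ ++ t :: l₂ ++ us.flatten)) := by
    rw [← Multiset.coe_eq_coe]
    simp only [← Multiset.coe_add, ← Multiset.cons_coe, ← Multiset.singleton_add]
    abel
  have hpq : (p ++ q).Sublist [m₁, m₂] := hp.append hq
  have hB : (p ++ q).toFinset ⊆ {m₁, m₂} := fun v hv ↦ by
    simpa using hpq.subset (List.mem_toFinset.1 hv)
  refine ⟨_, (p ++ q).toFinset, hB, hlinked, hrigid, ?_⟩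
  rw [Finset.union_comm]
  exact (Enumerates.append ⟨hpq.nodup (by simpa), by simp⟩ h.enumerates
    (hMA.mono_left hB)).of_perm hperm

variable {T R : Finset V} {M : V → Finset V}

theorem IsSkeleton.exists_of_isExpansion (h : IsSkeleton G X A L us)
    (hM : IsExpansion G T R 2 M) (hRX : Disjoint R (X ∪ T)) (hRA : Disjoint R A) :
    ∃ L', ∃ B ⊆ T.biUnion M, IsSkeleton G (X ∪ T) (A ∪ B) L' us := by
  induction T using Finset.induction_on with
  | empty => exact ⟨L, ∅, by simp, by simpa using h⟩
  | insert t T ht ih =>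
    have hsub : T ⊆ insert t T := Finset.subset_insert t T
    have hXT : X ∪ T ⊆ X ∪ insert t T := Finset.union_subset_union_right hsub
    have ht_mem : t ∈ insert t T := Finset.mem_insert_self t T
    obtain ⟨L₁, B₁, hB₁, h₁⟩ := ih (hM.mono_left hsub) (hRX.mono_right hXT)
    have hdisj : Disjoint (M t) B₁ := .mono_right hB₁ <|
      (Finset.disjoint_biUnion_right _ _ _).2 fun t' ht' ↦ hM.pairwiseDisjoint ht_mem
        (hsub ht') (ne_of_mem_of_not_mem ht' ht).symm
    obtain ⟨L₂, B₂, hB₂, h₂⟩ := h₁.exists_insert (hM.card_eq t ht_mem) (hM.adj t ht_mem)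
      ((hRX.mono_right hXT).mono_left (hM.subset t ht_mem))
      (Finset.disjoint_union_right.2 ⟨hRA.mono_left (hM.subset t ht_mem), hdisj⟩)
    refine ⟨L₂, B₁ ∪ B₂, ?_, ?_⟩
    · rw [Finset.biUnion_insert, Finset.union_comm]
      exact Finset.union_subset_union hB₂ hB₁
    · rwa [Finset.union_insert, ← Finset.union_assoc]

/-! ### Closing a skeleton -/

variable {S C D : Finset V}

theorem exists_isCycleList_insert (hD : G.IsClique (D : Set V)) {p c c' : V} (hp : p ∉ D)
    (hc : c ∈ D) (hc' : c' ∈ D) (hne : c ≠ c') (hpc : G.Adj p c) (hpc' : G.Adj p c') :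
    ∃ l, IsCycleList G l ∧ Enumerates l (insert p D) := by
  let l := c :: ((D \ {c, c'}).toList ++ [c'])
  have hmem (v : V) : v ∈ l ↔ v ∈ D := by
    simp only [l, List.mem_cons, List.mem_append, Finset.mem_toList, List.not_mem_nil, or_false,
      Finset.mem_sdiff]
    grind
  have hnodup : l.Nodup := by
    have := (D \ {c, c'}).nodup_toList
    simp only [l, List.nodup_cons, List.nodup_append, List.mem_append, Finset.mem_toList]
    grind
  have hchain : l.IsChain G.Adj := List.Pairwise.isChain <|
    hnodup.pairwise_of_forall_ne fun a ha b hb ↦ hD ((hmem a).1 ha) ((hmem b).1 hb)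
  refine ⟨p :: l, .inr ⟨by simp [l], cycleChain_coe_iff.2 ⟨?_, ?_⟩⟩, ?_, ?_⟩
  · exact hchain.cons_cons hpc
  · simpa [l, List.getLast?_cons] using hpc'.symm
  · exact List.nodup_cons.2 ⟨(hmem p).not.2 hp, hnodup⟩
  · simp [hmem]

theorem IsSkeleton.hasListCover_of_card_eq_two (hclique : G.IsClique (S : Set V)ᶜ)
    (hDS : Disjoint D S) (h : IsSkeleton G S (S ∪ D) L us) (hS : S.card = 2)
    (hL : L.length + 2 ≤ D.card) (hus : us.length < r) : HasListCover G (S ∪ D) r := by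
  have htwo : 1 < (D \ L.toFinset).card := by
    have := Finset.le_card_sdiff L.toFinset D
    have := L.toFinset_card_le
    omega
  obtain ⟨c, hc, c', hc', hne⟩ := Finset.one_lt_card.1 htwo
  rw [Finset.mem_sdiff, List.mem_toFinset] at hc hc'
  obtain ⟨hus_ne, hcS⟩ := h.adj_of_card_eq_two hS (Finset.mem_union_right S hc.1) hc.2
    (Finset.disjoint_left.1 hDS hc.1)
  obtain ⟨-, hcS'⟩ := h.adj_of_card_eq_two hS (Finset.mem_union_right S hc'.1) hc'.2
    (Finset.disjoint_left.1 hDS hc'.1)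
  obtain ⟨p, q, hpq, rfl⟩ := Finset.card_eq_two.1 hS
  have hDclique : G.IsClique (D : Set V) :=
    hclique.subset fun v hv ↦ Finset.disjoint_left.1 hDS hv
  have hpD : p ∉ D := Finset.disjoint_right.1 hDS (by simp)
  have hqD : q ∉ D := Finset.disjoint_right.1 hDS (by simp)
  obtain ⟨l, hl, henum⟩ := exists_isCycleList_insert hDclique hpD hc.1 hc'.1 hne
    (hcS p (by simp)) (hcS' p (by simp))
  have hr : 2 ≤ r := by
    have := List.length_pos_of_ne_nil hus_ne
    omega
  refine ⟨[[q], l], hr, ?_, by simpa using ⟨.inl rfl, hl⟩⟩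
  have hunion : {p, q} ∪ D = {q} ∪ insert p D := by grind
  rw [hunion]
  simpa using Enumerates.append (l := [q]) (A := {q}) (by simp [Enumerates]) henum
    (by simp [hqD, hpq.symm])

theorem IsSkeleton.hasListCover (hclique : G.IsClique (S : Set V)ᶜ) (hDS : Disjoint D S)
    (h : IsSkeleton G S (S ∪ D) L us) (hS : 2 ≤ S.card) (hD : 2 * S.card ≤ D.card)
    (hus : us.length < r) : HasListCover G (S ∪ D) r := by
  have hcycles : ∀ u ∈ us, IsCycleList G u := fun u hu ↦ (h.isRigidCycle u hu).isCycleList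
  by_cases hnil : L = []
  · exact ⟨us, hus.le, by simpa [hnil] using h.enumerates, hcycles⟩
  by_cases hlen : L.length = 2
  -- Two vertices do not form a cycle; but then the rigid cycles contain at least `2 |S| - 2`
  -- and at most `|S|` vertices of `D`, so that `|S| = 2`.
  · have hle : (D \ L.toFinset).card ≤ S.card :=
      card_le_card_of_isRigidCycle h.isRigidCycle h.enumerates.1.of_append_right
        (hDS.mono_left Finset.sdiff_subset) fun v hv ↦ by
          rw [Finset.mem_sdiff, List.mem_toFinset] at hv
          have hv' := (h.enumerates.2 v).2 (Finset.mem_union_right S hv.1)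
          exact (List.mem_append.1 hv').resolve_left hv.2
    have := Finset.le_card_sdiff L.toFinset D
    have := L.toFinset_card_le
    exact h.hasListCover_of_card_eq_two hclique hDS (by omega) (by omega) hus
  · have hL := h.isLinkedPath.isCycleList hclique h.enumerates.1.of_append_left hnil hlen
    exact ⟨L :: us, hus, h.enumerates, List.forall_mem_cons.2 ⟨hL, hcycles⟩⟩

/-! ### Kernels -/

theorem HasListCover.of_isExpansion (hclique : G.IsClique (S : Set V)ᶜ) {D' : Finset V}
    (hXS : X ⊆ S) (hM : IsExpansion G (S \ X) R 2 M) (hR : ∀ v ∈ R, ∀ a, G.Adj a v → a ∉ X)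
    (hRS : Disjoint R S) (hDS : Disjoint D S) (hDS' : Disjoint D' S) (hRD' : D \ R ⊆ D')
    (hMD' : (S \ X).biUnion M ⊆ D') (hS : 2 ≤ S.card) (hD : S.card < D.card)
    (hD' : 2 * S.card ≤ D'.card) (h : HasListCover G (S ∪ D) r) : HasListCover G (S ∪ D') r := by
  have hcard : X.card < ((S ∪ D) \ X).card := calc
    X.card ≤ S.card := Finset.card_le_card hXS
    _ < D.card := hD
    _ ≤ ((S ∪ D) \ X).card := Finset.card_le_card <|
      Finset.subset_sdiff.2 ⟨Finset.subset_union_right, hDS.mono_right hXS⟩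
  obtain ⟨L, us, hus, hskel⟩ := h.exists_isSkeleton hcard
  obtain ⟨L₁, hskel₁⟩ := hskel.exists_sdiff (hRS.mono_right hXS) hR
  have hXT : X ∪ S \ X = S := Finset.union_sdiff_of_subset hXS
  obtain ⟨L₂, B, hB, hskel₂⟩ :=
    hskel₁.exists_of_isExpansion hM (by rwa [hXT]) Finset.disjoint_sdiff
  rw [hXT] at hskel₂
  obtain ⟨L₃, hskel₃⟩ := hskel₂.exists_union hDS'
  have hunion : (S ∪ D) \ R ∪ B ∪ D' = S ∪ D' := by
    rw [Finset.union_sdiff_distrib, Finset.sdiff_eq_self_of_disjoint hRS.symm, Finset.union_assoc,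
      Finset.union_assoc, Finset.union_eq_right.2 (hB.trans hMD'), Finset.union_eq_right.2 hRD']
  rw [hunion] at hskel₃
  exact hskel₃.hasListCover hclique hDS' hS hD' hus

theorem exists_subset_hasListCover_iff_of_two_le_card (hclique : G.IsClique (S : Set V)ᶜ)
    (hCS : Disjoint C S) (hS : 2 ≤ S.card) (hC : 2 * S.card ≤ C.card) :
    ∃ D ⊆ C, D.card ≤ 2 * S.card ∧ ∀ r, HasListCover G (S ∪ C) r ↔ HasListCover G (S ∪ D) r := by
  obtain ⟨X, hXS, R, hRC, hcard, hR, M, hM⟩ := exists_isExpansion G S C 2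
  have hMC : (S \ X).biUnion M ⊆ C := hM.biUnion_subset.trans hRC
  have hcore : (C \ R ∪ (S \ X).biUnion M).card ≤ 2 * S.card := calc
    _ ≤ (C \ R).card + ((S \ X).biUnion M).card := Finset.card_union_le _ _
    _ ≤ 2 * X.card + 2 * (S \ X).card := Nat.add_le_add hcard hM.card_biUnion.le
    _ = 2 * S.card := by rw [← mul_add, add_comm, Finset.card_sdiff_add_card_eq_card hXS]
  obtain ⟨D, hcoreD, hDC, hD⟩ := Finset.exists_subsuperset_card_eq
    (Finset.union_subset Finset.sdiff_subset hMC) hcore hC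
  rw [Finset.union_subset_iff] at hcoreD
  have hDS := hCS.mono_left hDC
  have hRS := hCS.mono_left hRC
  refine ⟨D, hDC, hD.le, fun r ↦ ⟨fun h ↦ ?_, fun h ↦ ?_⟩⟩
  · exact h.of_isExpansion hclique hXS hM hR hRS hCS hDS hcoreD.1 hcoreD.2 hS (by omega) hD.ge
  · exact h.of_isExpansion hclique hXS hM hR hRS hDS hCS (Finset.sdiff_subset.trans hDC) hMC hS
      (by omega) hC

theorem hasListCover_insert_iff_one_le (hD : G.IsClique (D : Set V)) {x c c' : V} (hx : x ∉ D)
    (hc : c ∈ D) (hc' : c' ∈ D) (hne : c ≠ c') (hxc : G.Adj x c) (hxc' : G.Adj x c') :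
    HasListCover G (insert x D) r ↔ 1 ≤ r := by
  constructor
  · rintro ⟨ls, hr, henum, -⟩
    obtain ⟨l, hl, -⟩ := List.mem_flatten.1 ((henum.2 x).2 (Finset.mem_insert_self x D))
    exact (List.length_pos_of_mem hl).trans_le hr
  · intro hr
    obtain ⟨l, hl, henum⟩ := exists_isCycleList_insert hD hx hc hc' hne hxc hxc'
    exact ⟨[l], hr, by simpa using henum, by simpa using hl⟩

theorem hasListCover_insert_iff_two_le {x : V} (hclique : G.IsClique ({x} : Set V)ᶜ)
    (hx : x ∉ D) (hadj : ∀ c ∈ D, ∀ c' ∈ D, G.Adj x c → G.Adj x c' → c = c')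
    (hnonempty : D.Nonempty) (hcard : D.card ≠ 2) :
    HasListCover G (insert x D) r ↔ 2 ≤ r := by
  have hpos := hnonempty.card_pos
  constructor
  · rintro ⟨ls, hr, henum, hcycle⟩
    by_contra! hlt
    have hlen := henum.length_eq
    rw [Finset.card_insert_of_notMem hx] at hlen
    match ls, hr with
    | [], _ => simp at hlen
    | [l], _ =>
      rw [List.flatten_singleton] at henum hlen
      obtain ⟨hlen', hchain⟩ := (hcycle l (by simp)).resolve_left (by omega)
      obtain ⟨y, hy, z, hz, hyz, hyx, hxz⟩ := exists_rel_of_cycleChain henum.1 hlen' hchain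
        ((henum.2 x).2 (Finset.mem_insert_self x D))
      have hyD := Finset.mem_of_mem_insert_of_ne ((henum.2 y).1 hy) hyx.ne
      have hzD := Finset.mem_of_mem_insert_of_ne ((henum.2 z).1 hz) hxz.ne'
      exact hyz (hadj y hyD z hzD hyx.symm hxz)
    | _ :: _ :: _, hr => grind
  · intro hr
    have hlinked : IsLinkedPath G {x} D.toList := .of_forall_notMem (by grind [Finset.mem_toList])
    have hcycle : IsCycleList G D.toList := hlinked.isCycleList (by simpa using hclique)
      D.nodup_toList (by simpa using hnonempty.ne_empty) (by simpa using hcard)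
    refine ⟨[[x], D.toList], hr, ?_, by simpa using ⟨.inl rfl, hcycle⟩⟩
    simpa using Enumerates.append (l := [x]) (A := {x}) (by simp [Enumerates]) (.toList D)
      (by simpa using hx)

theorem exists_subset_hasListCover_iff_of_singleton {x : V}
    (hclique : G.IsClique ({x} : Set V)ᶜ) (hx : x ∉ C) (hC : 2 < C.card) :
    ∃ D ⊆ C, D.card ≤ 2 ∧ ∀ r, HasListCover G (insert x C) r ↔ HasListCover G (insert x D) r := by
  have hCclique : G.IsClique (C : Set V) :=
    hclique.subset (Set.subset_compl_singleton_iff.2 (mod_cast hx))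
  by_cases hadj : ∀ c ∈ C, ∀ c' ∈ C, G.Adj x c → G.Adj x c' → c = c'
  · obtain ⟨c, hc⟩ : C.Nonempty := Finset.card_pos.1 (by omega)
    refine ⟨{c}, by simpa, by simp, fun r ↦ ?_⟩
    rw [hasListCover_insert_iff_two_le hclique hx hadj ⟨c, hc⟩ hC.ne',
      hasListCover_insert_iff_two_le hclique (by grind) (by grind) (by simp) (by simp)]
  · push Not at hadj
    obtain ⟨c, hc, c', hc', hxc, hxc', hne⟩ := hadj
    have hsub : {c, c'} ⊆ C := by grind
    refine ⟨{c, c'}, hsub, Finset.card_le_two, fun r ↦ ?_⟩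
    rw [hasListCover_insert_iff_one_le hCclique hx hc hc' hne hxc hxc',
      hasListCover_insert_iff_one_le (hCclique.subset (Finset.coe_subset.2 hsub)) (by grind)
        (Finset.mem_insert_self c _) (by simp) hne hxc hxc']

theorem exists_subset_hasListCover_iff (hclique : G.IsClique (S : Set V)ᶜ) (hCS : Disjoint C S)
    (hS : S.Nonempty) :
    ∃ D ⊆ C, D.card ≤ 2 * S.card ∧ ∀ r, HasListCover G (S ∪ C) r ↔ HasListCover G (S ∪ D) r := by
  rcases Nat.lt_or_ge (2 * S.card) C.card with hC | hC
  swap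
  · exact ⟨C, subset_rfl, hC, fun _ ↦ Iff.rfl⟩
  rcases Nat.lt_or_ge 1 S.card with hS' | hS'
  · exact exists_subset_hasListCover_iff_of_two_le_card hclique hCS hS' hC.le
  · obtain ⟨x, rfl⟩ := Finset.card_eq_one.1 (hS'.antisymm hS.card_pos)
    simpa [Finset.singleton_union] using exists_subset_hasListCover_iff_of_singleton
      (by simpa using hclique) (by simpa using hCS) (by simpa using hC)

end CycleCover

/-- Kernelization: if `S` is a nonempty co-vertex cover of `G` (the vertices outside `S` form
a clique), then there is a set `C' ⊆ V(G) \ S` with `|S ∪ C'| ≤ 3|S|` such that for every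
positive integer `r`, `G` has a cycle cover of size at most `r` iff the induced subgraph
`G[S ∪ C']` has a cycle cover of size at most `r`. -/
theorem stmt6 {V : Type*} [Fintype V] [DecidableEq V] (G : SimpleGraph V)
    (S : Finset V) (hS : S.Nonempty)
    (hclique : ∀ u v : V, u ∉ S → v ∉ S → u ≠ v → G.Adj u v) :
    ∃ C' : Finset V, Disjoint C' S ∧ (S ∪ C').card ≤ 3 * S.card ∧
      ∀ r : ℕ, 0 < r →
        (HasCycleCoverLE G r ↔
          HasCycleCoverLE (G.induce (↑(S ∪ C') : Set V)) r) := by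
  have hclique' : G.IsClique (S : Set V)ᶜ := fun u hu v hv ↦ hclique u v hu hv
  obtain ⟨D, hDS, hD, hiff⟩ :=
    CycleCover.exists_subset_hasListCover_iff hclique' (C := Sᶜ) disjoint_compl_left hS
  refine ⟨D, disjoint_compl_left.mono_left hDS, ?_, fun r _ ↦ ?_⟩
  · calc (S ∪ D).card ≤ S.card + D.card := Finset.card_union_le S D
      _ ≤ 3 * S.card := by omega
  · rw [CycleCover.hasCycleCoverLE_iff, CycleCover.hasCycleCoverLE_induce_iff, ← hiff,
      Finset.union_compl]
end

section
/- Let G be a simple graph whose vertex set is partitioned into two sets S and C' with |C'| > |S|, and let Q be a cycle cover of G. Then some cycle of Q either is a trivial cycle whose unique vertex belongs to C', or contains an edge both of whose endpoints belong to C'. -/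
/-!
Orient every nontrivial cycle of the cover and send each vertex to its successor, a trivial cycle
being its own successor. This map is injective because the cycles are disjoint. A set with more
elements than its complement cannot be injected into the complement, so some vertex of the set has
its successor in the set.
-/

open Cardinal

section CycleCover

variable {V : Type*} {G : SimpleGraph V}

/-- The finite set `p` is the vertex set of a cycle of `G`, where a single vertex counts as a
trivial cycle. -/
def IsCycleVertexSet (G : SimpleGraph V) (p : Finset V) : Prop :=
  (∃ x, p = {x}) ∨ ∃ a : V, ∃ c : G.Walk a a, c.IsCycle ∧ ∀ x, x ∈ p ↔ x ∈ c.support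

/-- `Q` is a cycle cover of `G`, possibly infinite; each cycle is recorded by its vertex set. -/
structure IsCycleCover (G : SimpleGraph V) (Q : Set (Finset V)) : Prop where
  existsUnique_mem : ∀ x : V, ∃! p, p ∈ Q ∧ x ∈ p
  isCycleVertexSet : ∀ p ∈ Q, IsCycleVertexSet G p

/-- `y` is the successor of `x` along some oriented cycle of `G` with vertex set `p`; the vertex of
a trivial cycle is its own successor. -/
def IsCyclicStep (G : SimpleGraph V) (p : Finset V) (x y : V) : Prop :=
  (p = {x} ∧ y = x) ∨ ∃ a : V, ∃ c : G.Walk a a, c.IsCycle ∧ (∀ z, z ∈ p ↔ z ∈ c.support) ∧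
    ∃ i < c.length, c.getVert i = x ∧ c.getVert (i + 1) = y

theorem IsCyclicStep.right_mem {p : Finset V} {x y : V} (h : IsCyclicStep G p x y) : y ∈ p := by
  rcases h with ⟨rfl, rfl⟩ | ⟨a, c, -, hpc, i, -, -, rfl⟩
  · exact Finset.mem_singleton_self y
  · exact (hpc _).2 (c.getVert_mem_support _)

theorem exists_lt_length_getVert_eq {a x : V} {c : G.Walk a a} (hc : ¬ c.Nil)
    (hx : x ∈ c.support) : ∃ i < c.length, c.getVert i = x := by
  obtain ⟨i, rfl, hi⟩ := SimpleGraph.Walk.mem_support_iff_exists_getVert.1 hx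
  rcases hi.lt_or_eq with hlt | rfl
  · exact ⟨i, hlt, rfl⟩
  · exact ⟨0, SimpleGraph.Walk.not_nil_iff_lt_length.1 hc,
      c.getVert_zero.trans c.getVert_length.symm⟩

theorem exists_injOn_getVert_succ {a : V} {c : G.Walk a a} (hc : c.IsCycle) :
    ∃ f : V → V, Set.InjOn f {x | x ∈ c.support} ∧
      ∀ x ∈ c.support, ∃ i < c.length, c.getVert i = x ∧ c.getVert (i + 1) = f x := by
  choose! index index_lt getVert_index using
    fun x (hx : x ∈ c.support) => exists_lt_length_getVert_eq hc.not_nil hx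
  refine ⟨fun x => c.getVert (index x + 1), fun x hx y hy hxy => ?_,
    fun x hx => ⟨index x, index_lt x hx, getVert_index x hx, rfl⟩⟩
  have succ_eq : index x + 1 = index y + 1 :=
    hc.getVert_injOn ⟨Nat.le_add_left _ _, index_lt x hx⟩ ⟨Nat.le_add_left _ _, index_lt y hy⟩ hxy
  rw [← getVert_index x hx, ← getVert_index y hy, Nat.succ_injective succ_eq]

theorem IsCycleVertexSet.exists_injOn_isCyclicStep {p : Finset V} (hp : IsCycleVertexSet G p) :
    ∃ f : V → V, Set.InjOn f p ∧ ∀ x ∈ p, IsCyclicStep G p x (f x) := by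
  rcases hp with ⟨x, rfl⟩ | ⟨a, c, hc, hpc⟩
  · refine ⟨id, Set.injOn_id _, fun y hy => Or.inl ⟨?_, rfl⟩⟩
    rw [Finset.mem_singleton.1 hy]
  · obtain ⟨f, hinj, hstep⟩ := exists_injOn_getVert_succ hc
    exact ⟨f, hinj.mono fun x hx => (hpc x).1 hx,
      fun x hx => Or.inr ⟨a, c, hc, hpc, hstep x ((hpc x).1 hx)⟩⟩

theorem IsCycleCover.exists_injective_isCyclicStep {Q : Set (Finset V)} (hQ : IsCycleCover G Q) :
    ∃ f : V → V, Function.Injective f ∧ ∀ x, ∃ p ∈ Q, IsCyclicStep G p x (f x) := by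
  choose block hblock block_unique using hQ.existsUnique_mem
  have : Nonempty (V → V) := ⟨id⟩
  choose! succ succ_injOn succ_step using
    fun p hp => (hQ.isCycleVertexSet p hp).exists_injOn_isCyclicStep
  have step (x : V) : IsCyclicStep G (block x) x (succ (block x) x) :=
    succ_step _ (hblock x).1 x (hblock x).2
  refine ⟨fun x => succ (block x) x, fun x y hxy => ?_, fun x => ⟨block x, (hblock x).1, step x⟩⟩
  have block_succ (z : V) : block z = block (succ (block z) z) :=
    block_unique _ _ ⟨(hblock z).1, (step z).right_mem⟩
  have block_eq : block x = block y :=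
    (block_succ x).trans ((congrArg block hxy).trans (block_succ y).symm)
  refine succ_injOn _ (hblock x).1 (hblock x).2 (block_eq ▸ (hblock y).2) ?_
  exact hxy.trans (by rw [block_eq])

theorem exists_mem_apply_mem_of_mk_compl_lt {f : V → V} (hf : Function.Injective f) {T : Set V}
    (hT : #(Tᶜ : Set V) < #T) : ∃ x ∈ T, f x ∈ T := by
  by_contra! hcompl
  have image_subset : f '' T ⊆ Tᶜ := Set.image_subset_iff.2 hcompl
  exact hT.not_ge ((mk_image_eq hf).symm.trans_le (mk_le_mk_of_subset image_subset))

theorem stmt8_general (G : SimpleGraph V) {T : Set V} (hT : #(Tᶜ : Set V) < #T)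
    {Q : Set (Finset V)} (hQ : IsCycleCover G Q) :
    ∃ p ∈ Q, (∃ x, x ∈ T ∧ p = {x}) ∨
      ∃ a : V, ∃ c : G.Walk a a, c.IsCycle ∧ (∀ x, x ∈ p ↔ x ∈ c.support) ∧
        ∃ i, i < c.length ∧ c.getVert i ∈ T ∧ c.getVert (i + 1) ∈ T := by
  obtain ⟨f, hf, hstep⟩ := hQ.exists_injective_isCyclicStep
  obtain ⟨x, hx, hfx⟩ := exists_mem_apply_mem_of_mk_compl_lt hf hT
  obtain ⟨p, hp, ⟨rfl, -⟩ | ⟨a, c, hc, hpc, i, hi, hix, hifx⟩⟩ := hstep x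
  · exact ⟨{x}, hp, Or.inl ⟨x, hx, rfl⟩⟩
  · exact ⟨p, hp, Or.inr ⟨a, c, hc, hpc, i, hi, hix ▸ hx, hifx ▸ hfx⟩⟩

end CycleCover

/-- If the vertex set of `G` is partitioned into `S` and `C'` with `|C'| > |S|`, and `Q` is a
cycle cover of `G` (a set of pairwise vertex-disjoint cycles, single vertices counting as
trivial cycles, covering every vertex exactly once), then some cycle of `Q` either is a
trivial cycle whose unique vertex belongs to `C'`, or contains an edge both of whose
endpoints belong to `C'`. -/
theorem stmt8 {V : Type*} [Fintype V] [DecidableEq V] (G : SimpleGraph V)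
    (S C' : Finset V) (hdisj : Disjoint S C') (hunion : S ∪ C' = Finset.univ)
    (hcard : S.card < C'.card)
    (Q : Finset (Finset V))
    (hcover : ∀ x : V, ∃! p, p ∈ Q ∧ x ∈ p)
    (hQ : ∀ p ∈ Q, (∃ x, p = {x}) ∨
      ∃ a : V, ∃ c : G.Walk a a, c.IsCycle ∧ ∀ x, x ∈ p ↔ x ∈ c.support) :
    ∃ p ∈ Q, (∃ x, x ∈ C' ∧ p = {x}) ∨
      ∃ a : V, ∃ c : G.Walk a a, c.IsCycle ∧ (∀ x, x ∈ p ↔ x ∈ c.support) ∧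
        ∃ i, i < c.length ∧ c.getVert i ∈ C' ∧ c.getVert (i + 1) ∈ C' := by
  have hS : S = C'ᶜ := (IsCompl.of_eq hdisj.eq_bot hunion).eq_compl
  have hlt : #((C' : Set V)ᶜ : Set V) < #(C' : Set V) := by
    simpa [← Finset.coe_compl, ← hS] using hcard
  exact stmt8_general G hlt (Q := Q) ⟨hcover, hQ⟩
end
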